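/- arXiv:1610.08849 — 2 statements merged into one kernel-verified Lean document; each statement's English description precedes it below -/
import Mathlib

section
/- For every positive integer n, the n-ladder graph P_n × P_2 has a prime labeling; that is, there exists a bijection f from the vertex set of P_n × P_2 to {1, 2, ..., 2n} such that for every pair of adjacent vertices u and v, gcd(f(u), f(v)) = 1. -/
open SimpleGraph

lemma expsum_zero {ι : Type*} (s : Finset ι) (c μ : ι → ℂ)
    (h : ∀ d < s.card, ∑ i ∈ s, c i * μ i ^ d = 0) (d : ℕ) :
    ∑ i ∈ s, c i * μ i ^ d = 0 := by
  classical
  set Q : Polynomial ℂ := ∏ i ∈ s, (Polynomial.X - Polynomial.C (μ i)) with hQ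
  have hmon : Q.Monic := Polynomial.monic_prod_of_monic _ _ (fun i _ => Polynomial.monic_X_sub_C _)
  have hdeg : Q.natDegree = s.card := by
    rw [hQ, Polynomial.natDegree_prod_of_monic _ _ (fun i _ => Polynomial.monic_X_sub_C _)]
    simp
  have hroot : ∀ i ∈ s, Q.eval (μ i) = 0 := by
    intro i hi
    rw [hQ, Polynomial.eval_prod]
    exact Finset.prod_eq_zero hi (by simp)
  set r := (Polynomial.X ^ d : Polynomial ℂ) %ₘ Q with hr
  have hev : ∀ i ∈ s, μ i ^ d = r.eval (μ i) := by
    intro i hi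
    have := Polynomial.modByMonic_add_div (Polynomial.X ^ d : Polynomial ℂ) Q
    have h2 := congrArg (Polynomial.eval (μ i)) this
    simp only [Polynomial.eval_add, Polynomial.eval_mul, hroot i hi, Polynomial.eval_pow, Polynomial.eval_X] at h2
    rw [← h2]; simp [hr]
  have hrd : r = 0 ∨ r.natDegree < s.card := by
    by_cases h0 : r = 0
    · left; exact h0
    · right
      have := Polynomial.degree_modByMonic_lt (Polynomial.X ^ d : Polynomial ℂ) hmon
      rw [← hdeg]
      exact Polynomial.natDegree_lt_natDegree h0 this
  rcases hrd with h0 | hlt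
  · apply Finset.sum_eq_zero
    intro i hi
    rw [hev i hi, h0]; simp
  · have : ∀ i ∈ s, c i * μ i ^ d = ∑ j ∈ Finset.range s.card, r.coeff j * (c i * μ i ^ j) := by
      intro i hi
      rw [hev i hi, Polynomial.eval_eq_sum_range' hlt, Finset.mul_sum]
      exact Finset.sum_congr rfl (fun j _ => by ring)
    rw [Finset.sum_congr rfl this, Finset.sum_comm]
    apply Finset.sum_eq_zero
    intro j hj
    rw [← Finset.mul_sum, h j (Finset.mem_range.mp hj), mul_zero]

lemma sieve_abstract (S : Finset ℕ) (w : ℕ → ℕ) (P : ℕ → ℕ → Prop)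
    (a μ : ℕ → ℕ → ℂ)
    (hg : ∀ l ∈ S, ∀ d, (∑ j ∈ Finset.range (w l), a l j * μ l j ^ d ≠ 0 ↔ P l d))
    (hex : ∃ d, ∀ l ∈ S, P l d) : ∃ d < ∏ l ∈ S, w l, ∀ l ∈ S, P l d := by
  classical
  by_contra hcon
  push Not at hcon
  obtain ⟨d0, hd0⟩ := hex
  have hprod : ∀ d, ∏ l ∈ S, ∑ j ∈ Finset.range (w l), a l j * μ l j ^ d
      = ∑ p ∈ S.pi (fun l => Finset.range (w l)),
        (∏ x ∈ S.attach, a x.1 (p x.1 x.2)) * (∏ x ∈ S.attach, μ x.1 (p x.1 x.2)) ^ d := by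
    intro d
    rw [Finset.prod_sum]
    refine Finset.sum_congr rfl (fun p _ => ?_)
    rw [← Finset.prod_pow, ← Finset.prod_mul_distrib]
  have hz := expsum_zero (S.pi (fun l => Finset.range (w l)))
    (fun p => ∏ x ∈ S.attach, a x.1 (p x.1 x.2)) (fun p => ∏ x ∈ S.attach, μ x.1 (p x.1 x.2)) ?_ d0
  · rw [← hprod, Finset.prod_eq_zero_iff] at hz
    obtain ⟨l, hl, h⟩ := hz
    exact ((hg l hl d0).mpr (hd0 l hl)) h
  · intro d hd
    rw [Finset.card_pi] at hd
    simp only [Finset.card_range] at hd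
    obtain ⟨l, hl, h⟩ := hcon d hd
    rw [← hprod]
    apply Finset.prod_eq_zero hl
    by_contra h2
    exact h ((hg l hl d).mp h2)

lemma avoid_two {l : ℕ} (hl : l.Prime) (h2 : l ≠ 2) (b1 b2 : ℕ) :
    ∃ r, ¬ l ∣ 2 * r + 1 + b1 ∧ ¬ l ∣ 2 * r + 1 + b2 := by
  have h3 : 3 ≤ l := by have := hl.two_le; omega
  have key : ∀ b x y, x < y → y ≤ 2 → l ∣ 2 * x + 1 + b → l ∣ 2 * y + 1 + b → False := by
    intro b x y hxy hy hx hy'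
    have h := (Nat.dvd_sub hy' hx)
    have e : 2 * y + 1 + b - (2 * x + 1 + b) = 2 * (y - x) := by omega
    rw [e] at h
    rcases (Nat.Prime.dvd_mul hl).mp h with h | h
    · exact h2 ((Nat.prime_dvd_prime_iff_eq hl Nat.prime_two).mp h)
    · have := Nat.le_of_dvd (by omega) h; omega
  by_contra hcon
  push Not at hcon
  have q0 := hcon 0
  have q1 := hcon 1
  have q2 := hcon 2
  have a1 := key b1 0 1 (by norm_num) (by norm_num)
  have a2 := key b1 0 2 (by norm_num) (by norm_num)
  have a3 := key b1 1 2 (by norm_num) (by norm_num)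
  have c1 := key b2 0 1 (by norm_num) (by norm_num)
  have c2 := key b2 0 2 (by norm_num) (by norm_num)
  have c3 := key b2 1 2 (by norm_num) (by norm_num)
  tauto

lemma sieve (S : Finset ℕ) (hS : ∀ l ∈ S, l.Prime ∧ l ≠ 2) (b1 b2 : ℕ → ℕ) (w : ℕ → ℕ)
    (hw : ∀ l ∈ S, w l = 3 ∨ (w l = 2 ∧ b1 l = b2 l)) :
    ∃ d < ∏ l ∈ S, w l, ∀ l ∈ S, ¬ l ∣ 2 * d + 1 + b1 l ∧ ¬ l ∣ 2 * d + 1 + b2 l := by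
  classical
  have hz : ∀ l, ∃ z : ℂ, l ∈ S → IsPrimitiveRoot z l := by
    intro l
    by_cases hl : l ∈ S
    · exact ⟨_, fun _ => Complex.isPrimitiveRoot_exp l (hS l hl).1.ne_zero⟩
    · exact ⟨0, fun h => absurd h hl⟩
  choose z hz using hz
  have hex : ∃ d, ∀ l ∈ S, (¬ l ∣ 2 * d + 1 + b1 l ∧ ¬ l ∣ 2 * d + 1 + b2 l) := by
    have hr : ∀ l, ∃ r, l ∈ S → (¬ l ∣ 2 * r + 1 + b1 l ∧ ¬ l ∣ 2 * r + 1 + b2 l) := by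
      intro l
      by_cases hl : l ∈ S
      · obtain ⟨r, hr⟩ := avoid_two (hS l hl).1 (hS l hl).2 (b1 l) (b2 l)
        exact ⟨r, fun _ => hr⟩
      · exact ⟨0, fun h => absurd h hl⟩
    choose r hr using hr
    obtain ⟨d, hd⟩ := Nat.chineseRemainderOfFinset r (fun l => l) S
      (fun l hl => (hS l hl).1.ne_zero)
      (fun l hl l' hl' hne => (Nat.coprime_primes (hS l hl).1 (hS l' hl').1).mpr hne)
    refine ⟨d, fun l hl => ?_⟩
    have h1 := hd l hl
    have h2 := hr l hl
    have hb : ∀ b, (l ∣ 2 * d + 1 + b ↔ l ∣ 2 * r l + 1 + b) := by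
      intro b
      have : 2 * d + 1 + b ≡ 2 * r l + 1 + b [MOD l] :=
        ((h1.mul_left 2).add_right 1).add_right b
      exact this.dvd_iff dvd_rfl
    rw [hb, hb]
    exact h2
  refine sieve_abstract S w _
    (fun l j => if j = 0 then 1 else if w l = 2 then - z l ^ (1 + b1 l) else
      if j = 1 then - (z l ^ (1 + b1 l) + z l ^ (1 + b2 l)) else z l ^ (2 + b1 l + b2 l))
    (fun l j => z l ^ (2 * j)) ?_ hex
  intro l hl d
  have hp := hz l hl
  have hiff : ∀ b, (1 - z l ^ (2 * d + 1 + b) ≠ 0 ↔ ¬ l ∣ 2 * d + 1 + b) := by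
    intro b
    rw [← hp.pow_eq_one_iff_dvd, sub_ne_zero, ne_comm, Ne]
  rcases hw l hl with h3 | ⟨h2, hb⟩
  · rw [← hiff, ← hiff, ← mul_ne_zero_iff]
    have : ∀ x y : ℂ, x = y → (x ≠ 0 ↔ y ≠ 0) := by intro x y h; rw [h]
    apply this
    rw [h3]
    simp only [Finset.sum_range_succ, Finset.sum_range_zero]
    norm_num
    ring
  · rw [← hb, and_self, ← hiff]
    have : ∀ x y : ℂ, x = y → (x ≠ 0 ↔ y ≠ 0) := by intro x y h; rw [h]
    apply this
    rw [h2]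
    simp only [Finset.sum_range_succ, Finset.sum_range_zero]
    norm_num
    ring

structure GoodLab (n : ℕ) (a b : ℕ → ℕ) : Prop where
  ra : ∀ i < n, 1 ≤ a i ∧ a i ≤ 2 * n
  rb : ∀ i < n, 1 ≤ b i ∧ b i ≤ 2 * n
  cab : ∀ i < n, Nat.Coprime (a i) (b i)
  ca : ∀ i, i + 1 < n → Nat.Coprime (a i) (a (i + 1))
  cb : ∀ i, i + 1 < n → Nat.Coprime (b i) (b (i + 1))
  ia : ∀ i < n, ∀ j < n, a i = a j → i = j
  ib : ∀ i < n, ∀ j < n, b i = b j → i = j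
  iab : ∀ i < n, ∀ j < n, a i ≠ b j

lemma GoodLab.swap {n : ℕ} {a b : ℕ → ℕ} (h : GoodLab n a b) : GoodLab n b a :=
  ⟨h.rb, h.ra, fun i hi => (h.cab i hi).symm, h.cb, h.ca, h.ib, h.ia,
    fun i hi j hj e => h.iab j hj i hi e.symm⟩

lemma goodLab_zero (a b : ℕ → ℕ) : GoodLab 0 a b := by
  constructor <;> intros <;> omega

lemma coprime_of_succ {x y : ℕ} (h : x = y + 1 ∨ y = x + 1) : Nat.Coprime x y := by
  rcases h with h | h <;> subst h <;> simp

lemma coprime_col {p i j : ℕ} (hp : p.Prime) (hi : 1 ≤ i) (hj : 1 ≤ j) (h : i + j = p) :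
    Nat.Coprime i j := by
  have h1 : Nat.Coprime i p := (Nat.coprime_of_lt_prime (by omega) (by omega) hp).symm
  rw [← h] at h1
  simpa using h1

lemma good_append {n m k p d : ℕ} {a b : ℕ → ℕ} (hp : p.Prime) (hpk : p = 2 * n + k)
    (hk : k = 2 * m + 1) (hmn : m < n) (hL : GoodLab m a b) (hd1 : 1 ≤ d) (hd2 : d + m ≤ n)
    (hdk : Nat.Coprime d k) (hdn : Nat.Coprime d (2 * n))
    (hu : 0 < m → Nat.Coprime (2 * m + d) (a 0))
    (hv : 0 < m → Nat.Coprime (2 * n + 1 - d) (b 0)) :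
    ∃ a' b', GoodLab n a' b' := by
  classical
  obtain ⟨a', ha'⟩ : ∃ a' : ℕ → ℕ, ∀ t, (t < n - m - d → a' t = n + m - t) ∧
      (n - m - d ≤ t → t < n - m → a' t = k + (t - (n - m - d))) ∧
      (n - m ≤ t → a' t = a (t - (n - m))) :=
    ⟨fun t => if t < n - m - d then n + m - t else if t < n - m then k + (t - (n - m - d))
      else a (t - (n - m)), fun t => ⟨fun h => by simp [h], fun h h2 => by
        simp [h2, Nat.not_lt.mpr h], fun h => by
        have h1 : ¬ t < n - m - d := by omega
        have h2 : ¬ t < n - m := by omega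
        simp only [h1, h2, if_false]⟩⟩
  obtain ⟨b', hb'⟩ : ∃ b' : ℕ → ℕ, ∀ t, (t < n - m - d → b' t = p - (n + m - t)) ∧
      (n - m - d ≤ t → t < n - m → b' t = p - (k + (t - (n - m - d)))) ∧
      (n - m ≤ t → b' t = b (t - (n - m))) :=
    ⟨fun t => if t < n - m - d then p - (n + m - t) else if t < n - m then
      p - (k + (t - (n - m - d))) else b (t - (n - m)), fun t => ⟨fun h => by simp [h], fun h h2 => by
        simp [h2, Nat.not_lt.mpr h], fun h => by
        have h1 : ¬ t < n - m - d := by omega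
        have h2 : ¬ t < n - m := by omega
        simp only [h1, h2, if_false]⟩⟩
  have hsum : ∀ t < n - m, 2 * m + 1 ≤ a' t ∧ a' t ≤ n + m ∧ a' t + b' t = p := by
    intro t ht
    obtain ⟨h1, h2, -⟩ := ha' t
    obtain ⟨h3, h4, -⟩ := hb' t
    rcases Nat.lt_or_ge t (n - m - d) with h | h
    · rw [h1 h, h3 h]; omega
    · rw [h2 h ht, h4 h ht]; omega
  have hsm : ∀ t < n, n - m ≤ t → a' t ≤ 2 * m ∧ b' t ≤ 2 * m ∧ 1 ≤ a' t ∧ 1 ≤ b' t := by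
    intro t ht h
    rw [(ha' t).2.2 h, (hb' t).2.2 h]
    have h1 := hL.ra (t - (n - m)) (by omega)
    have h2 := hL.rb (t - (n - m)) (by omega)
    omega
  have hinj : ∀ i < n - m, ∀ j < n - m, a' i = a' j → i = j := by
    intro i hi j hj e
    obtain ⟨h1, h2, -⟩ := ha' i
    obtain ⟨h3, h4, -⟩ := ha' j
    rcases Nat.lt_or_ge i (n - m - d) with h | h <;> rcases Nat.lt_or_ge j (n - m - d) with h' | h'
    · rw [h1 h, h3 h'] at e; omega
    · rw [h1 h, h4 h' hj] at e; omega
    · rw [h2 h hi, h3 h'] at e; omega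
    · rw [h2 h hi, h4 h' hj] at e; omega
  refine ⟨a', b', ?_, ?_, ?_, ?_, ?_, ?_, ?_, ?_⟩
  · intro i hi
    rcases Nat.lt_or_ge i (n - m) with h | h
    · have := hsum i h; omega
    · have := hsm i hi h; omega
  · intro i hi
    rcases Nat.lt_or_ge i (n - m) with h | h
    · have := hsum i h; omega
    · have := hsm i hi h; omega
  · intro i hi
    rcases Nat.lt_or_ge i (n - m) with h | h
    · have := hsum i h
      exact coprime_col hp (by omega) (by omega) this.2.2
    · rw [(ha' i).2.2 h, (hb' i).2.2 h]
      exact hL.cab _ (by omega)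
  · intro i hi
    rcases Nat.lt_or_ge (i + 1) (n - m - d) with h | h
    · rw [(ha' i).1 (by omega), (ha' (i+1)).1 h]
      exact coprime_of_succ (by omega)
    rcases Nat.lt_or_ge (i + 1) (n - m) with h' | h'
    · rcases Nat.lt_or_ge i (n - m - d) with h'' | h''
      · rw [(ha' i).1 h'', (ha' (i+1)).2.1 h h']
        have e1 : n + m - i = k + d := by omega
        have e2 : k + (i + 1 - (n - m - d)) = k := by omega
        rw [e1, e2]
        simpa using hdk
      · rw [(ha' i).2.1 h'' (by omega), (ha' (i+1)).2.1 h h']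
        exact coprime_of_succ (by omega)
    · rcases Nat.lt_or_ge i (n - m) with h'' | h''
      · rw [(ha' i).2.1 (by omega) h'', (ha' (i+1)).2.2 h']
        have e1 : k + (i - (n - m - d)) = 2 * m + d := by omega
        have e2 : i + 1 - (n - m) = 0 := by omega
        rw [e1, e2]
        exact hu (by omega)
      · rw [(ha' i).2.2 h'', (ha' (i+1)).2.2 h']
        have e2 : i + 1 - (n - m) = i - (n - m) + 1 := by omega
        rw [e2]
        exact hL.ca _ (by omega)
  · intro i hi
    rcases Nat.lt_or_ge (i + 1) (n - m - d) with h | h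
    · rw [(hb' i).1 (by omega), (hb' (i+1)).1 h]
      exact coprime_of_succ (by omega)
    rcases Nat.lt_or_ge (i + 1) (n - m) with h' | h'
    · rcases Nat.lt_or_ge i (n - m - d) with h'' | h''
      · rw [(hb' i).1 h'', (hb' (i+1)).2.1 h h']
        have e1 : p - (n + m - i) = 2 * n - d := by omega
        have e2 : p - (k + (i + 1 - (n - m - d))) = 2 * n - d + d := by omega
        rw [e1, e2]
        have e3 : 2 * n = 2 * n - d + d := by omega
        rw [e3] at hdn
        have : Nat.Coprime d (2 * n - d) := by simpa using hdn
        simpa using this.symm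
      · rw [(hb' i).2.1 h'' (by omega), (hb' (i+1)).2.1 h h']
        exact coprime_of_succ (by omega)
    · rcases Nat.lt_or_ge i (n - m) with h'' | h''
      · rw [(hb' i).2.1 (by omega) h'', (hb' (i+1)).2.2 h']
        have e1 : p - (k + (i - (n - m - d))) = 2 * n + 1 - d := by omega
        have e2 : i + 1 - (n - m) = 0 := by omega
        rw [e1, e2]
        exact hv (by omega)
      · rw [(hb' i).2.2 h'', (hb' (i+1)).2.2 h']
        have e2 : i + 1 - (n - m) = i - (n - m) + 1 := by omega
        rw [e2]
        exact hL.cb _ (by omega)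
  · intro i hi j hj e
    rcases Nat.lt_or_ge i (n - m) with h | h <;> rcases Nat.lt_or_ge j (n - m) with h' | h'
    · exact hinj i h j h' e
    · have := hsum i h; have := hsm j hj h'; omega
    · have := hsum j h'; have := hsm i hi h; omega
    · rw [(ha' i).2.2 h, (ha' j).2.2 h'] at e
      have := hL.ia _ (by omega) _ (by omega) e
      omega
  · intro i hi j hj e
    rcases Nat.lt_or_ge i (n - m) with h | h <;> rcases Nat.lt_or_ge j (n - m) with h' | h'
    · have := hsum i h; have := hsum j h'
      exact hinj i h j h' (by omega)
    · have := hsum i h; have := hsm j hj h'; omega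
    · have := hsum j h'; have := hsm i hi h; omega
    · rw [(hb' i).2.2 h, (hb' j).2.2 h'] at e
      have := hL.ib _ (by omega) _ (by omega) e
      omega
  · intro i hi j hj e
    rcases Nat.lt_or_ge i (n - m) with h | h <;> rcases Nat.lt_or_ge j (n - m) with h' | h'
    · have := hsum i h; have := hsum j h'; omega
    · have := hsum i h; have := hsm j hj h'; omega
    · have := hsum j h'; have := hsm i hi h; omega
    · rw [(ha' i).2.2 h, (hb' j).2.2 h'] at e
      exact hL.iab _ (by omega) _ (by omega) e

/-- The case where `q = 2m+1` is one or a prime and `2n+q` is a prime. -/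
lemma good_hairpin {n m : ℕ} (hp : (2 * n + (2 * m + 1)).Prime) (hq : m = 0 ∨ (2 * m + 1).Prime)
    (hmn : m < n) : ∃ a b, GoodLab n a b := by
  have hL : GoodLab m (fun i => 2 * m - i) (fun i => i + 1) := by
    constructor
    · intro i hi; omega
    · intro i hi; omega
    · intro i hi
      rcases hq with h | h
      · omega
      · exact coprime_col h (by omega) (by omega) (by omega)
    · intro i hi; exact coprime_of_succ (by omega)
    · intro i hi; exact coprime_of_succ (by omega)
    · intro i hi j hj e; omega
    · intro i hi j hj e; omega
    · intro i hi j hj e; omega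
  refine good_append hp rfl rfl hmn hL le_rfl (by omega) (by simp) (by simp) ?_ ?_
  · intro _; exact coprime_of_succ (by omega)
  · intro _; simp

lemma good_final {n : ℕ} {a b : ℕ → ℕ} (h : GoodLab n a b) :
    ∃ f : Fin n × Fin 2 → ℕ,
      Set.BijOn f Set.univ (Set.Icc 1 (2 * n)) ∧
      ∀ u v : Fin n × Fin 2,
        (pathGraph n □ pathGraph 2).Adj u v → Nat.gcd (f u) (f v) = 1 := by
  classical
  set f : Fin n × Fin 2 → ℕ := fun u => if u.2 = 0 then a u.1 else b u.1 with hf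
  have h0 : ∀ i : Fin n, f (i, 0) = a i := by intro i; simp [hf]
  have h1 : ∀ i : Fin n, f (i, 1) = b i := by intro i; simp [hf]
  have hcase : ∀ j : Fin 2, j = 0 ∨ j = 1 := by decide
  have hinj : Function.Injective f := by
    rintro ⟨i, j⟩ ⟨i', j'⟩ e
    rcases hcase j with rfl | rfl <;> rcases hcase j' with rfl | rfl
    · rw [h0, h0] at e
      rw [Fin.ext (h.ia _ i.2 _ i'.2 e)]
    · rw [h0, h1] at e
      exact absurd e (h.iab _ i.2 _ i'.2)
    · rw [h0, h1] at e
      exact absurd e.symm (h.iab _ i'.2 _ i.2)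
    · rw [h1, h1] at e
      rw [Fin.ext (h.ib _ i.2 _ i'.2 e)]
  have hmem : ∀ u, f u ∈ Finset.Icc 1 (2 * n) := by
    rintro ⟨i, j⟩
    rw [Finset.mem_Icc]
    rcases hcase j with rfl | rfl
    · rw [h0]; exact h.ra _ i.2
    · rw [h1]; exact h.rb _ i.2
  have himg : Finset.univ.image f = Finset.Icc 1 (2 * n) := by
    apply Finset.eq_of_subset_of_card_le
    · intro x hx
      obtain ⟨u, -, rfl⟩ := Finset.mem_image.mp hx
      exact hmem u
    · rw [Finset.card_image_of_injective _ hinj]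
      simp; omega
  refine ⟨f, ⟨fun u _ => by simpa using hmem u, hinj.injOn, ?_⟩, ?_⟩
  · intro x hx
    have : x ∈ Finset.univ.image f := by rw [himg]; simpa using hx
    obtain ⟨u, -, rfl⟩ := Finset.mem_image.mp this
    exact ⟨u, trivial, rfl⟩
  · rintro ⟨i, j⟩ ⟨i', j'⟩ hadj
    rw [boxProd_adj] at hadj
    simp only [pathGraph_adj] at hadj
    rcases hadj with ⟨hij, rfl⟩ | ⟨hjj, rfl⟩
    · rcases hcase j with rfl | rfl
      · rw [h0, h0]
        rcases hij with e | e
        · have := h.ca i (by omega); rwa [e] at this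
        · have := h.ca i' (by omega); rw [e] at this; exact this.symm
      · rw [h1, h1]
        rcases hij with e | e
        · have := h.cb i (by omega); rwa [e] at this
        · have := h.cb i' (by omega); rw [e] at this; exact this.symm
    · rcases hcase j with rfl | rfl <;> rcases hcase j' with rfl | rfl
      · simp at hjj
      · rw [h0, h1]; exact h.cab _ i.2
      · rw [h0, h1]; exact (h.cab _ i.2).symm
      · simp at hjj

/-- The product of the primes up to 155. -/
def primF : ℕ := 225319534991831177328890236228992001350685163362356544091910

/-- A cheap (incomplete) primality test for numbers below `156 ^ 2`. -/
def isP (p : ℕ) : Bool :=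
  (Nat.blt 1 p && Nat.blt p 24336 && Nat.beq (Nat.gcd p primF) 1) ||
  (Nat.blt 1 p && Nat.blt p 169 && Nat.beq (Nat.gcd p 2310) 1) ||
  Nat.beq p 2 || Nat.beq p 3 || Nat.beq p 5 || Nat.beq p 7 || Nat.beq p 11

lemma dvd_primF : ∀ q < 156, q.Prime → q ∣ primF := by decide +kernel

lemma dvd_2310 : ∀ q < 13, q.Prime → q ∣ 2310 := by decide +kernel

lemma prime_of_gcd {p F B : ℕ} (hF : ∀ q < B, q.Prime → q ∣ F) (h1 : 1 < p) (h2 : p < B * B)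
    (h3 : Nat.gcd p F = 1) : p.Prime := by
  by_contra hp
  have hm := Nat.minFac_sq_le_self (by omega) hp
  have hmp : p.minFac.Prime := Nat.minFac_prime (by omega)
  have hlt : p.minFac < B := by
    by_contra h
    have : B * B ≤ p.minFac * p.minFac := Nat.mul_le_mul (by omega) (by omega)
    nlinarith
  have := Nat.dvd_gcd (Nat.minFac_dvd p) (hF _ hlt hmp)
  rw [h3] at this
  exact hmp.one_lt.ne' (Nat.dvd_one.mp this)

lemma isP_sound {p : ℕ} (h : isP p = true) : p.Prime := by
  simp only [isP, Bool.or_eq_true, Bool.and_eq_true, Nat.blt_eq, Nat.beq_eq] at h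
  rcases h with (((((h | h) | h) | h) | h) | h) | h
  · exact prime_of_gcd dvd_primF h.1.1 (by omega) h.2
  · exact prime_of_gcd dvd_2310 h.1.1 (by omega) h.2
  all_goals (subst h; norm_num)

def smallQs : List ℕ := [1, 3, 5, 7, 11, 13, 17, 19, 23, 29, 31, 37, 41, 43, 47, 53, 59, 61, 67,
  71, 73, 79, 83, 89, 97, 101, 103, 107, 109, 113, 127, 131, 137, 139, 149]

def smallOk (n : ℕ) : Bool := smallQs.any (fun q => Nat.blt q (2 * n) && isP (2 * n + q))

/-- `smallOk` on `[s, s + 2 ^ e)` -/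
def smallRange : ℕ → ℕ → Bool
  | 0, s => smallOk s
  | e + 1, s => smallRange e s && smallRange e (s + 2 ^ e)

lemma smallRange_sound (e : ℕ) : ∀ s, smallRange e s = true → ∀ n, s ≤ n → n < s + 2 ^ e →
    smallOk n = true := by
  induction e with
  | zero => intro s h n h1 h2; have : n = s := by omega
            rw [this]; exact h
  | succ e ih =>
    intro s h n h1 h2
    simp only [smallRange, Bool.and_eq_true] at h
    rw [pow_succ] at h2
    rcases Nat.lt_or_ge n (s + 2 ^ e) with h' | h'
    · exact ih _ h.1 n h1 h'
    · exact ih _ h.2 n h' (by omega)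

lemma smallRange_true : smallRange 12 1 = true := by decide +kernel

lemma smallQs_prime : ∀ q ∈ smallQs, q = 1 ∨ (q.Prime ∧ q ≠ 2) := by decide +kernel

lemma small_exists {n : ℕ} (h1 : 1 ≤ n) (h2 : n ≤ 4096) :
    ∃ m < n, (m = 0 ∨ (2 * m + 1).Prime) ∧ (2 * n + (2 * m + 1)).Prime := by
  have h := smallRange_sound 12 1 smallRange_true n h1 (by omega)
  simp only [smallOk, List.any_eq_true, Bool.and_eq_true, Nat.blt_eq] at h
  obtain ⟨q, hq, hlt, hp⟩ := h
  have hp := isP_sound hp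
  rcases smallQs_prime q hq with rfl | ⟨hqp, hq2⟩
  · exact ⟨0, by omega, Or.inl rfl, hp⟩
  · obtain ⟨m, rfl⟩ := hqp.odd_of_ne_two hq2
    exact ⟨m, by omega, Or.inr hqp, hp⟩

/-- modular exponentiation -/
def pwm (a m : ℕ) : ℕ → ℕ → ℕ
  | 0, _ => 1 % m
  | f + 1, e => ((pwm a m f (e / 2)) ^ 2 * a ^ (e % 2)) % m

lemma pwm_eq (a m f : ℕ) : ∀ e < 2 ^ f, pwm a m f e = a ^ e % m := by
  induction f with
  | zero => intro e he; have : e = 0 := by omega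
            subst this; simp [pwm]
  | succ f ih =>
    intro e he
    rw [pow_succ] at he
    rw [pwm, ih (e / 2) (by omega)]
    have : a ^ e = (a ^ (e / 2)) ^ 2 * a ^ (e % 2) := by
      rw [← pow_mul, ← pow_add]; congr 1; omega
    rw [this, Nat.mul_mod, Nat.pow_mod, Nat.mod_mod, ← Nat.pow_mod, ← Nat.mul_mod]

/-- Lucas certificate check -/
def lucasB (p g : ℕ) (fs : List ℕ) : Bool :=
  Nat.blt 1 p && Nat.blt p (2 ^ 40) && fs.all isP && Nat.beq (fs.prod + 1) p &&
    Nat.beq (pwm g p 40 (p - 1)) 1 && fs.all (fun q => !(Nat.beq (pwm g p 40 ((p - 1) / q)) 1))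

lemma lucasB_sound {p g : ℕ} {fs : List ℕ} (h : lucasB p g fs = true) : p.Prime := by
  simp only [lucasB, Bool.and_eq_true, Nat.blt_eq, Nat.beq_eq, List.all_eq_true] at h
  obtain ⟨⟨⟨⟨⟨h1, h2⟩, h3⟩, h4⟩, h5⟩, h6⟩ := h
  rw [pwm_eq _ _ _ _ (by omega)] at h5
  have hcast : ∀ e, ((g : ZMod p) ^ e = 1 ↔ g ^ e % p = 1) := by
    intro e
    have : ((g : ZMod p) ^ e = 1) ↔ ((g ^ e : ℕ) : ZMod p) = ((1 : ℕ) : ZMod p) := by push_cast; rfl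
    rw [this, ZMod.natCast_eq_natCast_iff, Nat.ModEq, Nat.mod_eq_of_lt h1]
  refine lucas_primality p (g : ZMod p) ((hcast _).mpr h5) ?_
  intro q hq hdvd
  have hq' : q ∣ fs.prod := by
    have : p - 1 = fs.prod := by omega
    rwa [this] at hdvd
  obtain ⟨r, hr, hqr⟩ := (Prime.dvd_prod_iff hq.prime).mp hq'
  have e := (Nat.prime_dvd_prime_iff_eq hq (isP_sound (h3 r hr))).mp hqr
  subst e
  have h7 := h6 q hr
  rw [pwm_eq _ _ _ _ (lt_of_le_of_lt (Nat.div_le_self _ _) (by omega))] at h7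
  rw [Ne, hcast]
  intro h8
  rw [h8] at h7
  simp at h7

/-- `4096 * C` -/
def critK : ℕ := 4096 * 1260209630

/-- Each entry is a prime with a Lucas certificate. -/
def covers : ℕ → List (ℕ × ℕ × List ℕ) → Bool
  | a, [] => Nat.ble (2 ^ 35) a
  | a, (p, g, fs) :: t => (isP p || lucasB p g fs) && Nat.ble (2 * a) p && Nat.blt p (4 * a) &&
      Nat.beq (p % 2) 1 &&
      Nat.ble (critK * (p / 2) * (p - 2 * a) ^ 3) ((4 * a - p) ^ 6) && covers (p / 2 + 1) t

def table : List (ℕ × ℕ × List ℕ) :=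
  [(8209, 0, []),
   (8431, 0, []),
   (8669, 0, []),
   (8893, 0, []),
   (9151, 0, []),
   (9421, 0, []),
   (9697, 0, []),
   (9973, 0, []),
   (10273, 0, []),
   (10601, 0, []),
   (10939, 0, []),
   (11299, 0, []),
   (11681, 0, []),
   (12073, 0, []),
   (12497, 0, []),
   (12941, 0, []),
   (13417, 0, []),
   (13921, 0, []),
   (14449, 0, []),
   (15017, 0, []),
   (15619, 0, []),
   (16253, 0, []),
   (16937, 0, []),
   (17669, 0, []),
   (18451, 0, []),
   (19289, 0, []),
   (20183, 0, []),
   (21149, 0, []),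
   (22193, 0, []),
   (23321, 0, []),
   (24533, 2, [2, 2, 6133]),
   (25849, 7, [2, 2, 2, 3, 3, 359]),
   (27283, 5, [2, 3, 4547]),
   (28843, 2, [2, 3, 11, 19, 23]),
   (30559, 7, [2, 3, 11, 463]),
   (32429, 3, [2, 2, 11, 11, 67]),
   (34487, 5, [2, 43, 401]),
   (36761, 6, [2, 2, 2, 5, 919]),
   (39251, 2, [2, 5, 5, 5, 157]),
   (42023, 5, [2, 21011]),
   (45121, 7, [2, 2, 2, 2, 2, 2, 3, 5, 47]),
   (48571, 2, [2, 3, 5, 1619]),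
   (52457, 3, [2, 2, 2, 79, 83]),
   (56827, 2, [2, 3, 3, 7, 11, 41]),
   (61781, 2, [2, 2, 5, 3089]),
   (67421, 2, [2, 2, 5, 3371]),
   (73877, 2, [2, 2, 11, 23, 73]),
   (81307, 2, [2, 3, 3, 4517]),
   (89909, 2, [2, 2, 7, 13, 13, 19]),
   (99929, 3, [2, 2, 2, 12491]),
   (111667, 2, [2, 3, 37, 503]),
   (125551, 3, [2, 3, 3, 3, 3, 5, 5, 31]),
   (142123, 2, [2, 3, 23687]),
   (162079, 3, [2, 3, 7, 17, 227]),
   (186317, 2, [2, 2, 13, 3583]),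
   (216071, 7, [2, 5, 17, 31, 41]),
   (252881, 3, [2, 2, 2, 2, 5, 29, 109]),
   (299281, 21, [2, 2, 2, 2, 3, 5, 29, 43]),
   (358441, 13, [2, 2, 2, 3, 5, 29, 103]),
   (434921, 3, [2, 2, 2, 5, 83, 131]),
   (535351, 13, [2, 3, 5, 5, 43, 83]),
   (669479, 13, [2, 37, 83, 109]),
   (851839, 3, [2, 3, 13, 67, 163]),
   (1104769, 11, [2, 2, 2, 2, 2, 2, 2, 3, 3, 7, 137]),
   (1462801, 11, [2, 2, 2, 2, 3, 5, 5, 23, 53]),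
   (1980749, 2, [2, 2, 7, 11, 59, 109]),
   (2747627, 5, [2, 7, 7, 23, 23, 53]),
   (3910201, 29, [2, 2, 2, 3, 5, 5, 7, 7, 7, 19]),
   (5715901, 2, [2, 2, 3, 3, 3, 5, 5, 29, 73]),
   (8589923, 2, [2, 11, 53, 53, 139]),
   (13277689, 7, [2, 2, 2, 3, 47, 79, 149]),
   (21107221, 10, [2, 2, 3, 5, 61, 73, 79]),
   (34484633, 3, [2, 2, 2, 7, 7, 13, 67, 101]),
   (57838699, 2, [2, 3, 3, 3, 3, 19, 19, 23, 43]),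
   (99421781, 2, [2, 2, 5, 17, 17, 103, 167]),
   (174799351, 3, [2, 3, 3, 3, 5, 5, 11, 79, 149]),
   (313628737, 5, [2, 2, 2, 2, 2, 2, 3, 23, 29, 31, 79]),
   (572905477, 5, [2, 2, 3, 3, 11, 11, 13, 67, 151]),
   (1062981781, 6, [2, 2, 3, 5, 7, 17, 53, 53, 53]),
   (1998802129, 17, [2, 2, 2, 2, 3, 19, 19, 31, 61, 61]),
   (3801170591, 11, [2, 5, 7, 7, 7, 17, 19, 47, 73]),
   (7297330951, 11, [2, 3, 3, 5, 5, 7, 13, 19, 83, 113]),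
   (14119072801, 13, [2, 2, 2, 2, 2, 3, 5, 5, 7, 53, 101, 157]),
   (27494013941, 2, [2, 2, 5, 47, 53, 61, 83, 109]),
   (53820357427, 5, [2, 3, 3, 11, 17, 29, 53, 101, 103]),
   (105804235759, 6, [2, 3, 13, 17, 17, 17, 17, 109, 149])]

lemma covers_true : covers 4000 table = true := by decide +kernel

lemma covers_sound (T : List (ℕ × ℕ × List ℕ)) : ∀ a, covers a T = true → ∀ n, a ≤ n → n < 2 ^ 35 →
    ∃ p, p.Prime ∧ 2 * n < p ∧ p < 4 * n ∧ critK * n * (p - 2 * n) ^ 3 ≤ (4 * n - p) ^ 6 := by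
  induction T with
  | nil => intro a h n h1 h2; simp only [covers, Nat.ble_eq] at h; omega
  | cons x t ih =>
    obtain ⟨p, g, fs⟩ := x
    intro a h n h1 h2
    simp only [covers, Bool.and_eq_true, Bool.or_eq_true, Nat.ble_eq, Nat.blt_eq, Nat.beq_eq] at h
    obtain ⟨⟨⟨⟨⟨hp, ha⟩, hb⟩, hodd⟩, hK⟩, ht⟩ := h
    rcases Nat.lt_or_ge n (p / 2 + 1) with h' | h'
    · refine ⟨p, ?_, by omega, by omega, ?_⟩
      · rcases hp with hp | hp
        · exact isP_sound hp
        · exact lucasB_sound hp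
      · calc critK * n * (p - 2 * n) ^ 3 ≤ critK * (p / 2) * (p - 2 * a) ^ 3 := by
              apply Nat.mul_le_mul
              · exact Nat.mul_le_mul_left _ (by omega)
              · exact Nat.pow_le_pow_left (by omega) 3
          _ ≤ (4 * a - p) ^ 6 := hK
          _ ≤ (4 * n - p) ^ 6 := Nat.pow_le_pow_left (by omega) 6
    · exact ih _ ht n h' h2

lemma mid_exists {n : ℕ} (h1 : 4000 ≤ n) (h2 : n < 2 ^ 35) :
    ∃ p, p.Prime ∧ 2 * n < p ∧ p < 4 * n ∧ critK * n * (p - 2 * n) ^ 3 ≤ (4 * n - p) ^ 6 :=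
  covers_sound table 4000 covers_true n h1 h2

def cw (l : ℕ) : ℚ := if l = 3 then 81 else if l = 5 then 729 / 25 else if l = 7 then 729 / 49
  else if l = 11 then 729 / 121 else if l < 64 then 64 / l else 1

lemma cw_one {l : ℕ} (h3 : 3 ≤ l) : 1 ≤ cw l := by
  unfold cw
  split_ifs with h1 h2 h4 h5 h6
  · norm_num
  · norm_num
  · norm_num
  · norm_num
  · rw [le_div_iff₀ (by positivity)]
    have : (l : ℚ) < 64 := by exact_mod_cast h6
    linarith
  · exact le_rfl

lemma cw_two {l : ℕ} (h3 : 3 ≤ l) : (64 : ℚ) ≤ cw l * l := by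
  unfold cw
  split_ifs with h1 h2 h4 h5 h6
  · subst h1; norm_num
  · subst h2; norm_num
  · subst h4; norm_num
  · subst h5; norm_num
  · have : (l : ℚ) ≠ 0 := by positivity
    field_simp; norm_num
  · have : (64 : ℚ) ≤ l := by exact_mod_cast (by omega : 64 ≤ l)
    linarith

lemma cw_three {l : ℕ} (hl : l.Prime) (h2 : l ≠ 2) : (729 : ℚ) ≤ cw l * (l * l) := by
  have h3 : 3 ≤ l := by have := hl.two_le; omega
  by_cases h13 : 13 ≤ l
  · have h := cw_two h3
    have : (13 : ℚ) ≤ l := by exact_mod_cast h13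
    nlinarith
  · have : l = 3 ∨ l = 5 ∨ l = 7 ∨ l = 11 := by
      interval_cases l <;> first | omega | (exfalso; revert hl; norm_num)
    rcases this with rfl | rfl | rfl | rfl <;> norm_num [cw]

lemma cw_prod : ∏ l ∈ (Finset.range 64).filter (fun l => l.Prime ∧ l ≠ 2), cw l ≤ 1260209630 := by
  have : (Finset.range 64).filter (fun l => l.Prime ∧ l ≠ 2) =
      {3, 5, 7, 11, 13, 17, 19, 23, 29, 31, 37, 41, 43, 47, 53, 59, 61} := by decide +kernel
  rw [this]
  simp [cw]
  norm_num

lemma prod_ite_dvd_le (S : Finset ℕ) (hS : ∀ l ∈ S, l.Prime ∧ l ≠ 2) {X : ℕ} (hX : 0 < X) :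
    ∏ l ∈ S, (if l ∣ X then l else 1) ≤ X := by
  rw [← Finset.prod_filter]
  apply Nat.le_of_dvd hX
  exact Finset.prod_primes_dvd X (fun l hl => (hS l (Finset.mem_filter.mp hl).1).1.prime)
    (fun l hl => (Finset.mem_filter.mp hl).2)

lemma T_bound (S : Finset ℕ) (hS : ∀ l ∈ S, l.Prime ∧ l ≠ 2) {X Y : ℕ} (hX : 0 < X) (hY : 0 < Y)
    (hSd : ∀ l ∈ S, l ∣ X ∨ l ∣ Y) (w : ℕ → ℕ)
    (hw : ∀ l ∈ S, w l = if l ∣ X ∧ l ∣ Y then 3 else 2) :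
    (∏ l ∈ S, w l) ^ 6 ≤ 1260209630 * (X * Y) := by
  classical
  have h3 : ∀ l ∈ S, 3 ≤ l := by
    intro l hl; have := (hS l hl).1.two_le; have := (hS l hl).2; omega
  have hterm : ∀ l ∈ S, ((w l : ℚ)) ^ 6 ≤
      cw l * (((if l ∣ X then l else 1 : ℕ) : ℚ) * ((if l ∣ Y then l else 1 : ℕ) : ℚ)) := by
    intro l hl
    rw [hw l hl]
    have h2' := cw_two (h3 l hl)
    have h3' := cw_three (hS l hl).1 (hS l hl).2
    by_cases hx : l ∣ X <;> by_cases hy : l ∣ Y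
    · simp only [hx, hy, and_self, if_true]; push_cast; norm_num; linarith
    · simp only [hx, hy, and_false, if_true, if_false]; push_cast; norm_num; linarith
    · simp only [hx, hy, false_and, if_true, if_false]; push_cast; norm_num; linarith
    · rcases hSd l hl with h | h <;> contradiction
  have hc : ∏ l ∈ S, cw l ≤ 1260209630 := by
    refine le_trans ?_ cw_prod
    have e : ∏ l ∈ S, cw l = ∏ l ∈ S.filter (· < 64), cw l := by
      symm
      apply Finset.prod_subset (Finset.filter_subset _ _)
      intro l hl hl'
      have h64 : 64 ≤ l := by
        by_contra h
        exact hl' (Finset.mem_filter.mpr ⟨hl, by omega⟩)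
      unfold cw
      rw [if_neg (by omega), if_neg (by omega), if_neg (by omega), if_neg (by omega),
        if_neg (by omega)]
    rw [e]
    apply Finset.prod_le_prod_of_subset_of_one_le
    · intro l hl
      rw [Finset.mem_filter] at hl ⊢
      exact ⟨Finset.mem_range.mpr hl.2, hS l hl.1⟩
    · intro l hl
      have := cw_one (h3 l (Finset.mem_filter.mp hl).1)
      linarith
    · intro l hl _
      obtain ⟨hl1, hl2⟩ := (Finset.mem_filter.mp hl).2
      exact cw_one (by have := hl1.two_le; omega)
  have hx := prod_ite_dvd_le S hS hX
  have hy := prod_ite_dvd_le S hS hY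
  have hfin : ((∏ l ∈ S, w l : ℕ) : ℚ) ^ 6 ≤ 1260209630 * (X * Y) := by
    calc ((∏ l ∈ S, w l : ℕ) : ℚ) ^ 6 = ∏ l ∈ S, (w l : ℚ) ^ 6 := by
          push_cast; rw [Finset.prod_pow]
      _ ≤ ∏ l ∈ S, (cw l * (((if l ∣ X then l else 1 : ℕ) : ℚ) * ((if l ∣ Y then l else 1 : ℕ) : ℚ))) :=
          Finset.prod_le_prod (fun l _ => by positivity) hterm
      _ = (∏ l ∈ S, cw l) * (((∏ l ∈ S, (if l ∣ X then l else 1) : ℕ) : ℚ) *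
            ((∏ l ∈ S, (if l ∣ Y then l else 1) : ℕ) : ℚ)) := by
          rw [Finset.prod_mul_distrib, Finset.prod_mul_distrib, Nat.cast_prod, Nat.cast_prod]
      _ ≤ 1260209630 * (X * Y) := by
          apply mul_le_mul hc _ (by positivity) (by norm_num)
          apply mul_le_mul (by exact_mod_cast hx) (by exact_mod_cast hy) (by positivity) (by positivity)
  exact_mod_cast hfin

lemma crit_good {n p : ℕ} (hn : 0 < n) (hp : p.Prime) (h1 : 2 * n < p) (h2 : p < 4 * n)
    (hK : critK * n * (p - 2 * n) ^ 3 ≤ (4 * n - p) ^ 6)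
    (ih : ∀ m < n, ∃ a b, GoodLab m a b) : ∃ a b, GoodLab n a b := by
  classical
  obtain ⟨r, hr⟩ := hp.odd_of_ne_two (by omega)
  obtain ⟨m, rfl⟩ : ∃ m, p = 2 * n + (2 * m + 1) := ⟨r - n, by omega⟩
  have hmn : m < n := by omega
  rcases Nat.eq_zero_or_pos m with h0 | hm
  · exact good_hairpin hp (Or.inl h0) hmn
  obtain ⟨a, b, hL, hodd⟩ : ∃ a b, GoodLab m a b ∧ ¬ 2 ∣ b 0 := by
    obtain ⟨a, b, hL⟩ := ih m hmn
    by_cases hb : 2 ∣ b 0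
    · refine ⟨b, a, hL.swap, fun ha => ?_⟩
      have := Nat.dvd_gcd ha hb
      rw [hL.cab 0 hm] at this
      omega
    · exact ⟨a, b, hL, hb⟩
  have hu := hL.ra 0 hm
  have hv := hL.rb 0 hm
  have huv := hL.cab 0 hm
  set u := a 0 with hu_def
  set v := b 0 with hv_def
  set k := 2 * m + 1 with hk
  set S := ((n * k) * (u * v)).primeFactors.filter (fun l => l ≠ 2) with hSdef
  have hX : 0 < n * k := by positivity
  have hY : 0 < u * v := Nat.mul_pos (by omega) (by omega)
  have hSmem : ∀ l, l ∈ S ↔ (l.Prime ∧ (l ∣ n * k ∨ l ∣ u * v)) ∧ l ≠ 2 := by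
    intro l
    rw [hSdef, Finset.mem_filter, Nat.mem_primeFactors]
    constructor
    · rintro ⟨⟨hl, hd, -⟩, h⟩
      exact ⟨⟨hl, (Nat.Prime.dvd_mul hl).mp hd⟩, h⟩
    · rintro ⟨⟨hl, hd⟩, h⟩
      exact ⟨⟨hl, (Nat.Prime.dvd_mul hl).mpr hd, by positivity⟩, h⟩
  have hS : ∀ l ∈ S, l.Prime ∧ l ≠ 2 := fun l hl => ⟨((hSmem l).mp hl).1.1, ((hSmem l).mp hl).2⟩
  set bU : ℕ → ℕ := fun l => if l ∣ u then 2 * m else (2 * n + 1) * (l - 1) with hbU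
  set b1 : ℕ → ℕ := fun l => if l ∣ n * k then 0 else bU l with hb1
  set b2 : ℕ → ℕ := fun l => if l ∣ u * v then bU l else 0 with hb2
  set w : ℕ → ℕ := fun l => if l ∣ n * k ∧ l ∣ u * v then 3 else 2 with hw
  obtain ⟨e, heT, he⟩ := sieve S hS b1 b2 w (by
    intro l hl
    rcases ((hSmem l).mp hl).1.2 with h | h
    · by_cases h' : l ∣ u * v
      · left; simp [hw, h, h']
      · right; simp [hw, hb1, hb2, h, h']
    · by_cases h' : l ∣ n * k
      · left; simp [hw, h, h']
      · right; simp [hw, hb1, hb2, h, h'])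
  have hT := T_bound S hS hX hY (fun l hl => ((hSmem l).mp hl).1.2) w (fun l _ => rfl)
  set T := ∏ l ∈ S, w l with hTdef
  have hT4 : 4 * T ≤ 4 * n - (2 * n + k) := by
    have : (4 * T) ^ 6 ≤ (4 * n - (2 * n + k)) ^ 6 := by
      refine le_trans ?_ hK
      have e1 : 2 * n + k - 2 * n = k := by omega
      rw [e1]
      have : u * v ≤ k * k := Nat.mul_le_mul (by omega) (by omega)
      calc (4 * T) ^ 6 = 4096 * T ^ 6 := by ring
        _ ≤ 4096 * (1260209630 * (n * k * (u * v))) := Nat.mul_le_mul_left _ hT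
        _ ≤ 4096 * (1260209630 * (n * k * (k * k))) := by gcongr
        _ = critK * n * k ^ 3 := by unfold critK; ring
    exact (Nat.pow_le_pow_iff_left (by norm_num)).mp this
  refine good_append (d := 2 * e + 1) hp rfl hk hmn hL (by omega) (by omega) ?_ ?_ ?_ ?_
  · apply Nat.coprime_of_dvd
    intro q hq hqd hqk
    have h2 : q ≠ 2 := by rintro rfl; omega
    have hA : q ∣ n * k := hqk.mul_left n
    have := (he q ((hSmem q).mpr ⟨⟨hq, Or.inl hA⟩, h2⟩)).1
    simp only [hb1, hA, if_true] at this
    exact this hqd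
  · apply Nat.coprime_of_dvd
    intro q hq hqd hqn
    have h2 : q ≠ 2 := by rintro rfl; omega
    have hqn' : q ∣ n := by
      rcases (Nat.Prime.dvd_mul hq).mp hqn with h | h
      · exact absurd ((Nat.prime_dvd_prime_iff_eq hq Nat.prime_two).mp h) h2
      · exact h
    have hA : q ∣ n * k := hqn'.mul_right k
    have := (he q ((hSmem q).mpr ⟨⟨hq, Or.inl hA⟩, h2⟩)).1
    simp only [hb1, hA, if_true] at this
    exact this hqd
  · intro _
    apply Nat.coprime_of_dvd
    intro q hq hqd hqu
    have h2 : q ≠ 2 := by rintro rfl; omega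
    have hA : q ∣ u * v := hqu.mul_right v
    have := (he q ((hSmem q).mpr ⟨⟨hq, Or.inr hA⟩, h2⟩)).2
    have hqu' : q ∣ u := hqu
    simp only [hb2, hbU, hA, hqu', if_true] at this
    apply this
    convert hqd using 1
    ring
  · intro _
    apply Nat.coprime_of_dvd
    intro q hq hqd hqv
    have h2 : q ≠ 2 := by rintro rfl; exact hodd hqv
    have hA : q ∣ u * v := hqv.mul_left u
    have hqu' : ¬ q ∣ u := by
      intro h
      have := Nat.dvd_gcd h hqv
      rw [huv] at this
      exact hq.one_lt.ne' (Nat.dvd_one.mp this)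
    have := (he q ((hSmem q).mpr ⟨⟨hq, Or.inr hA⟩, h2⟩)).2
    simp only [hb2, hbU, hA, hqu', if_true, if_false] at this
    apply this
    rw [← Nat.dvd_add_left hqd]
    obtain ⟨q', rfl⟩ : ∃ q', q = q' + 1 := ⟨q - 1, by have := hq.two_le; omega⟩
    have : 2 * e + 1 + (2 * n + 1) * (q' + 1 - 1) + (2 * n + 1 - (2 * e + 1)) =
        (2 * n + 1) * (q' + 1) := by
      rw [Nat.add_sub_cancel, Nat.mul_succ]; omega
    rw [this]
    exact Dvd.intro_left _ rfl

lemma cb_bound {x H : ℕ} (hx : 2 < x) (hHx : 2 * H ≤ x)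
    (no_prime : ∀ p : ℕ, p.Prime → x < p → 2 * x - 2 * H < p) :
    Nat.centralBinom x ≤ (2 * x) ^ Nat.sqrt (2 * x) * 4 ^ (2 * x / 3) * (2 * x) ^ H := by
  classical
  set f : ℕ → ℕ := fun p => p ^ (Nat.centralBinom x).factorization p with hf
  set S := (Finset.range (2 * x + 1)).filter Nat.Prime with hS
  set O := (Finset.range H).image (fun i => 2 * x - 2 * i - 1) with hO
  have hprod : Nat.centralBinom x = ∏ p ∈ S, f p := by
    rw [← Nat.prod_pow_factorization_centralBinom x]
    symm
    refine Finset.prod_filter_of_ne fun p _ h => ?_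
    contrapose h
    simp only [hf]
    rw [Nat.factorization_eq_zero_of_not_prime _ h, pow_zero]
  have hterm : ∀ p ∈ S, f p ≤ (if p ≤ Nat.sqrt (2 * x) then 2 * x else 1) *
      (if p ≤ 2 * x / 3 then p else 1) * (if p ∈ O then 2 * x else 1) := by
    intro p hp
    obtain ⟨hp1, hpp⟩ := Finset.mem_filter.mp hp
    rw [Finset.mem_range] at hp1
    have hfle : f p ≤ 2 * x := Nat.pow_factorization_choose_le (by omega)
    have h1 : 1 ≤ (if p ≤ Nat.sqrt (2 * x) then 2 * x else 1) := by split_ifs <;> omega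
    have h2 : 1 ≤ (if p ≤ 2 * x / 3 then p else 1) := by
      have := hpp.one_lt; split_ifs <;> omega
    have h3 : 1 ≤ (if p ∈ O then 2 * x else 1) := by split_ifs <;> omega
    by_cases hs : p ≤ Nat.sqrt (2 * x)
    · rw [if_pos hs]
      calc f p ≤ 2 * x * 1 * 1 := by omega
        _ ≤ _ := Nat.mul_le_mul (Nat.mul_le_mul le_rfl h2) h3
    by_cases ht : p ≤ 2 * x / 3
    · rw [if_pos ht]
      have : f p ≤ p := by
        refine (Nat.pow_le_pow_right hpp.one_lt.le ?_).trans (pow_one p).le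
        exact Nat.factorization_choose_le_one (Nat.sqrt_lt'.mp <| not_le.1 hs)
      calc f p ≤ 1 * p * 1 := by omega
        _ ≤ _ := Nat.mul_le_mul (Nat.mul_le_mul h1 le_rfl) h3
    by_cases hpx : p ≤ x
    · have : f p = 1 := by
        rw [hf]
        simp only
        rw [Nat.factorization_centralBinom_of_two_mul_self_lt_three_mul hx hpx (by omega), pow_zero]
      rw [this]
      calc 1 = 1 * 1 * 1 := by norm_num
        _ ≤ _ := Nat.mul_le_mul (Nat.mul_le_mul h1 h2) h3
    · have hlt := no_prime p hpp (by omega)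
      obtain ⟨r, hr⟩ := hpp.odd_of_ne_two (by omega)
      have hmem : p ∈ O := by
        rw [hO, Finset.mem_image]
        exact ⟨x - r - 1, Finset.mem_range.mpr (by omega), by omega⟩
      rw [if_pos hmem]
      calc f p ≤ 1 * 1 * (2 * x) := by omega
        _ ≤ _ := Nat.mul_le_mul (Nat.mul_le_mul h1 h2) le_rfl
  rw [hprod]
  refine (Finset.prod_le_prod' hterm).trans ?_
  rw [Finset.prod_mul_distrib, Finset.prod_mul_distrib]
  refine Nat.mul_le_mul (Nat.mul_le_mul ?_ ?_) ?_
  · rw [← Finset.prod_filter, Finset.prod_const]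
    apply Nat.pow_le_pow_right (by omega)
    have hc : (Finset.Icc 1 (Nat.sqrt (2 * x))).card = Nat.sqrt (2 * x) := by simp
    refine (Finset.card_le_card fun p hp => ?_).trans hc.le
    obtain ⟨h1, h2⟩ := Finset.mem_filter.1 hp
    exact Finset.mem_Icc.mpr ⟨(Finset.mem_filter.1 h1).2.one_lt.le, h2⟩
  · refine le_trans ?_ (primorial_le_four_pow (2 * x / 3))
    rw [← Finset.prod_filter]
    refine Finset.prod_le_prod_of_subset_of_one_le' ?_ ?_
    · intro p hp
      obtain ⟨h1, h2⟩ := Finset.mem_filter.1 hp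
      exact Finset.mem_filter.mpr ⟨Finset.mem_range.mpr (by omega), (Finset.mem_filter.1 h1).2⟩
    · exact fun p hp _ => (Finset.mem_filter.1 hp).2.one_lt.le
  · rw [← Finset.prod_filter, Finset.prod_const]
    apply Nat.pow_le_pow_right (by omega)
    have hc : O.card ≤ H := by
      refine Finset.card_image_le.trans ?_
      simp
    refine (Finset.card_le_card fun p hp => ?_).trans hc
    exact (Finset.mem_filter.1 hp).2

lemma cuberoot_exists (x : ℕ) : ∃ c, c ^ 3 ≤ x ∧ x < (c + 1) ^ 3 := by
  induction x with
  | zero => exact ⟨0, by norm_num, by norm_num⟩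
  | succ x ih =>
    obtain ⟨c, h1, h2⟩ := ih
    by_cases h : x + 1 < (c + 1) ^ 3
    · exact ⟨c, by omega, h⟩
    · refine ⟨c + 1, by omega, ?_⟩
      have : x + 1 = (c + 1) ^ 3 := by omega
      rw [this]
      exact Nat.pow_lt_pow_left (by omega) (by norm_num)

lemma pow_ineq (v : ℕ) (hv : 12 ≤ v) : 91 * (3 * v + 4) ≤ 2 ^ v := by
  induction v, hv using Nat.le_induction with
  | base => norm_num
  | succ v hv ih => rw [pow_succ]; omega

lemma large_exists {n : ℕ} (hn : 2 ^ 35 ≤ n) :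
    ∃ p, p.Prime ∧ 2 * n < p ∧ p < 4 * n ∧ critK * n * (p - 2 * n) ^ 3 ≤ (4 * n - p) ^ 6 := by
  obtain ⟨c, hc1, hc2⟩ := cuberoot_exists (2 * n)
  have hc : 4096 ≤ c := by
    by_contra h
    have : (c + 1) ^ 3 ≤ 4096 ^ 3 := Nat.pow_le_pow_left (by omega) 3
    omega
  obtain ⟨y, hy⟩ : ∃ y, y = c + 1 := ⟨_, rfl⟩
  rw [← hy] at hc2
  obtain ⟨x, hx⟩ : ∃ x, x = 2 * n := ⟨_, rfl⟩
  rw [← hx] at hc1 hc2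
  have hy2 : 2000 * y ^ 2 ≤ 2001 * c ^ 2 := by subst hy; nlinarith
  have hHx : 2 * (60 * y ^ 2) ≤ x := by
    have : 4096 * c ^ 2 ≤ c ^ 3 := by
      rw [pow_succ c 2, mul_comm]; exact Nat.mul_le_mul_left _ hc
    omega
  have hypos : 0 < y ^ 2 := by subst hy; positivity
  obtain ⟨p, hp, hxp, hpx⟩ : ∃ p : ℕ, p.Prime ∧ x < p ∧ p ≤ 2 * x - 2 * (60 * y ^ 2) := by
    by_contra hcon
    push Not at hcon
    have hcb := cb_bound (x := x) (H := 60 * y ^ 2) (by omega) hHx hcon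
    have h4 := Nat.four_pow_lt_mul_centralBinom x (by omega)
    obtain ⟨s, hs⟩ : ∃ s, s = Nat.sqrt (2 * x) := ⟨_, rfl⟩
    rw [← hs] at hcb
    have hs2 : s * s ≤ 2 * x := by rw [hs]; exact Nat.sqrt_le _
    have hs10 : 10 * (s + 1) ≤ y ^ 2 := by
      by_contra h
      have h20 : y ^ 2 ≤ 20 * s := by
        have : 4097 * 4097 ≤ y * y := Nat.mul_le_mul (by omega) (by omega)
        have e : y ^ 2 = y * y := by ring
        omega
      have h1 : y ^ 2 * y ^ 2 ≤ 20 * s * (20 * s) := Nat.mul_le_mul h20 h20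
      have h2 : 4097 * y ^ 3 ≤ y * y ^ 3 := Nat.mul_le_mul_right _ (by omega)
      have h3 : y * y ^ 3 = y ^ 2 * y ^ 2 := by ring
      have h5 : 20 * s * (20 * s) = 400 * (s * s) := by ring
      omega
    set v := Nat.log 2 c with hv
    have hv1 : 2 ^ v ≤ c := Nat.pow_log_le_self 2 (by omega)
    have hv2 : c < 2 ^ (v + 1) := Nat.lt_pow_succ_log_self (by norm_num) c
    have hv12 : 12 ≤ v := by
      by_contra h
      have : 2 ^ (v + 1) ≤ 2 ^ 12 := Nat.pow_le_pow_right (by norm_num) (by omega)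
      omega
    have hvc := pow_ineq v hv12
    obtain ⟨u, hu⟩ : ∃ u, u = 3 * v + 4 := ⟨_, rfl⟩
    have h2x : 2 * x ≤ 2 ^ u := by
      have h1 : y ^ 3 ≤ (2 ^ (v + 1)) ^ 3 := Nat.pow_le_pow_left (by omega) 3
      have h2 : 2 * (2 ^ (v + 1)) ^ 3 = 2 ^ u := by rw [hu]; ring
      omega
    have hmain : 4 ^ x < 2 ^ (u * (s + 60 * y ^ 2 + 1) + 2 * (2 * x / 3)) := by
      calc 4 ^ x < x * Nat.centralBinom x := h4
        _ ≤ (2 * x) * ((2 * x) ^ s * 4 ^ (2 * x / 3) * (2 * x) ^ (60 * y ^ 2)) :=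
            Nat.mul_le_mul (by omega) hcb
        _ = (2 * x) ^ (s + 60 * y ^ 2 + 1) * 4 ^ (2 * x / 3) := by ring
        _ ≤ (2 ^ u) ^ (s + 60 * y ^ 2 + 1) * 4 ^ (2 * x / 3) := by gcongr
        _ = _ := by
            rw [pow_add 2 (u * _), pow_mul 2 u, pow_mul 2 2]; norm_num
    have e4 : (4 : ℕ) ^ x = 2 ^ (2 * x) := by rw [pow_mul]; norm_num
    rw [e4] at hmain
    have hlt := (Nat.pow_lt_pow_iff_right (by norm_num : 1 < 2)).mp hmain
    have hA : u * (s + 60 * y ^ 2 + 1) * 30 ≤ 20 * x := by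
      have h1 : (s + 60 * y ^ 2 + 1) * 10 ≤ 601 * y ^ 2 := by omega
      have h2 : u * ((s + 60 * y ^ 2 + 1) * 10) ≤ u * (601 * y ^ 2) := Nat.mul_le_mul_left _ h1
      have h3 : u * (2000 * y ^ 2) ≤ u * (2001 * c ^ 2) := Nat.mul_le_mul_left _ hy2
      have h5 : (91 * u) * c ^ 2 ≤ c * c ^ 2 := Nat.mul_le_mul_right _ (by omega)
      have h6 : c * c ^ 2 = c ^ 3 := by ring
      have h7 : u * c ^ 2 ≤ u * c ^ 2 := le_rfl
      nlinarith
    have h30 : 30 * (2 * (2 * x / 3)) ≤ 40 * x := by omega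
    generalize u * (s + 60 * y ^ 2 + 1) = A at *
    omega
  refine ⟨p, hp, by omega, by omega, ?_⟩
  have h1 : 120 * y ^ 2 ≤ 4 * n - p := by omega
  calc critK * n * (p - 2 * n) ^ 3 ≤ critK * n * (2 * n) ^ 3 := by
        apply Nat.mul_le_mul_left
        exact Nat.pow_le_pow_left (by omega) 3
    _ = (critK / 2) * x ^ 4 := by subst hx; unfold critK; norm_num; ring
    _ ≤ (critK / 2) * (y ^ 3) ^ 4 := by
        apply Nat.mul_le_mul_left
        exact Nat.pow_le_pow_left hc2.le 4
    _ ≤ 120 ^ 6 * (y ^ 3) ^ 4 := Nat.mul_le_mul_right _ (by norm_num [critK])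
    _ = (120 * y ^ 2) ^ 6 := by ring
    _ ≤ (4 * n - p) ^ 6 := Nat.pow_le_pow_left h1 6

lemma good_all (n : ℕ) : ∃ a b, GoodLab n a b := by
  induction n using Nat.strong_induction_on with
  | _ n ih =>
    rcases Nat.eq_zero_or_pos n with h0 | hpos
    · subst h0; exact ⟨id, id, goodLab_zero _ _⟩
    rcases Nat.lt_or_ge n 4000 with h | h
    · obtain ⟨m, hm, hq, hp⟩ := small_exists hpos (by omega)
      exact good_hairpin hp hq hm
    · have : ∃ p, p.Prime ∧ 2 * n < p ∧ p < 4 * n ∧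
          critK * n * (p - 2 * n) ^ 3 ≤ (4 * n - p) ^ 6 := by
        rcases Nat.lt_or_ge n (2 ^ 35) with h' | h'
        · exact mid_exists h h'
        · exact large_exists h'
      obtain ⟨p, hp, h1, h2, hK⟩ := this
      exact crit_good hpos hp h1 h2 hK ih

/-- For every positive integer `n`, the `n`-ladder graph `P_n × P_2` has a prime
labeling: a bijection from its vertices onto `{1, ..., 2n}` such that the labels
of any two adjacent vertices are relatively prime. -/
theorem ladder_has_prime_labeling (n : ℕ) (hn : 0 < n) :
    ∃ f : Fin n × Fin 2 → ℕ,
      Set.BijOn f Set.univ (Set.Icc 1 (2 * n)) ∧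
      ∀ u v : Fin n × Fin 2,
        (pathGraph n □ pathGraph 2).Adj u v → Nat.gcd (f u) (f v) = 1 := by
  obtain ⟨a, b, h⟩ := good_all n
  exact good_final h
end

section
/- For every positive integer n, the n-ladder graph P_n × P_2 is isomorphic to a subgraph of the coprime graph H_{2n}. -/
open SimpleGraph

/-! ### Ladders as lists of columns -/

/-- Consecutive columns of a coprime ladder. -/
def LadR (c d : ℤ × ℤ) : Prop := IsCoprime c.1 d.1 ∧ IsCoprime c.2 d.2

/-- A coprime ladder on `1, …, E` whose first column is `(E, E - 1)`. -/
def LadT (E : ℤ) : Prop :=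
  ∃ l : List (ℤ × ℤ), (∀ c ∈ l, IsCoprime c.1 c.2) ∧ l.IsChain LadR ∧
    2 * (l.length : ℤ) = E ∧ (∀ x : ℤ, 1 ≤ x → x ≤ E → ∃ c ∈ l, x = c.1 ∨ x = c.2) ∧
    ∀ c ∈ l.head?, c = (E, E - 1)

/-- The same as `LadT`, with the first column in either orientation. -/
def LadT' (E : ℤ) (a b : ℤ) : Prop :=
  ∃ l : List (ℤ × ℤ), (∀ c ∈ l, IsCoprime c.1 c.2) ∧ l.IsChain LadR ∧
    2 * (l.length : ℤ) = E ∧ (∀ x : ℤ, 1 ≤ x → x ≤ E → ∃ c ∈ l, x = c.1 ∨ x = c.2) ∧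
    ∀ c ∈ l.head?, c = (a, b)

lemma LadT'.swap {E a b : ℤ} (h : LadT' E a b) : LadT' E b a := by
  obtain ⟨l, h1, h2, h3, h4, h5⟩ := h
  refine ⟨l.map Prod.swap, ?_, ?_, ?_, ?_, ?_⟩
  · intro c hc
    obtain ⟨d, hd, rfl⟩ := List.mem_map.1 hc
    exact (h1 d hd).symm
  · rw [List.isChain_map]
    exact h2.imp fun _ _ h => ⟨h.2, h.1⟩
  · simpa using h3
  · intro x hx hx'
    obtain ⟨c, hc, h⟩ := h4 x hx hx'
    exact ⟨c.swap, List.mem_map_of_mem hc, h.symm⟩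
  · intro c hc
    rw [List.head?_map] at hc
    simp only [Option.mem_def, Option.map_eq_some_iff] at hc
    obtain ⟨d, hd, rfl⟩ := hc
    rw [h5 d hd]; rfl

/-- Consecutive columns in world coordinates `x ↔ N - x`. -/
def WR (N : ℤ) (c d : ℤ × ℤ) : Prop :=
  IsCoprime (N - c.1) (N - d.1) ∧ IsCoprime (N - c.2) (N - d.2)

lemma step_aux (N b c u v u' v' : ℤ) (lw : List (ℤ × ℤ))
    (hne : lw ≠ [])
    (hlen : 2 * (lw.length : ℤ) = b + 1 + c)
    (hcov : ∀ x, -c ≤ x → x ≤ b → ∃ p ∈ lw, x = p.1 ∨ x = p.2)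
    (hr : ∀ p ∈ lw, IsCoprime (N - p.1) (N - p.2))
    (hch : lw.IsChain (WR N))
    (hhead : ∀ p ∈ lw.head?, p = (u, v))
    (hlast : ∀ p ∈ lw.getLast?, WR N p (u', v'))
    (hT : LadT' (N - b - 1) (N - u') (N - v')) : LadT' (N + c) (N - u) (N - v) := by
  obtain ⟨l, h1, h2, h3, h4, h5⟩ := hT
  refine ⟨lw.map (fun p => (N - p.1, N - p.2)) ++ l, ?_, ?_, ?_, ?_, ?_⟩
  · intro d hd
    rcases List.mem_append.1 hd with hd | hd
    · obtain ⟨p, hp, rfl⟩ := List.mem_map.1 hd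
      exact hr p hp
    · exact h1 d hd
  · rw [List.isChain_append]
    refine ⟨?_, h2, ?_⟩
    · rw [List.isChain_map]
      exact hch
    · intro x hx y hy
      rw [List.getLast?_map] at hx
      simp only [Option.mem_def, Option.map_eq_some_iff] at hx
      obtain ⟨p, hp, rfl⟩ := hx
      rw [h5 y hy]
      exact hlast p hp
  · simp only [List.length_append, List.length_map]
    push_cast
    linarith
  · intro x hx hx'
    by_cases h : x ≤ N - b - 1
    · obtain ⟨d, hd, h⟩ := h4 x hx h
      exact ⟨d, List.mem_append_right _ hd, h⟩
    · obtain ⟨p, hp, h⟩ := hcov (N - x) (by omega) (by omega)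
      refine ⟨(N - p.1, N - p.2), List.mem_append_left _ (List.mem_map.2 ⟨p, hp, rfl⟩), ?_⟩
      simp only
      omega
  · intro d hd
    cases lw with
    | nil => exact absurd rfl hne
    | cons p t =>
      have := hhead p (by simp)
      simp only [List.map_cons, List.cons_append, List.head?_cons, Option.mem_def,
        Option.some.injEq] at hd
      rw [← hd, this]

lemma ladT_step (N b c : ℤ) (lw : List (ℤ × ℤ))
    (hne : lw ≠ [])
    (hlen : 2 * (lw.length : ℤ) = b + 1 + c)
    (hcov : ∀ x, -c ≤ x → x ≤ b → ∃ p ∈ lw, x = p.1 ∨ x = p.2)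
    (hr : ∀ p ∈ lw, IsCoprime (N - p.1) (N - p.2))
    (hch : lw.IsChain (WR N))
    (hhead : (∀ p ∈ lw.head?, p = (-c, -c + 1)) ∨ (∀ p ∈ lw.head?, p = (-c + 1, -c)))
    (hlast : (∀ p ∈ lw.getLast?, WR N p (b + 1, b + 2)) ∨
      (∀ p ∈ lw.getLast?, WR N p (b + 2, b + 1)))
    (hT : LadT (N - b - 1)) : LadT (N + c) := by
  have e1 : N - (b + 1) = N - b - 1 := by ring
  have e2 : N - (b + 2) = N - b - 1 - 1 := by ring
  have e3 : N - -c = N + c := by ring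
  have e4 : N - (-c + 1) = N + c - 1 := by ring
  have hT1 : LadT' (N - b - 1) (N - (b + 1)) (N - (b + 2)) := by
    rw [e1, e2]; exact hT
  have key : LadT' (N + c) (N - -c) (N - (-c + 1)) := by
    rcases hhead with hhead | hhead <;> rcases hlast with hlast | hlast
    · exact step_aux N b c _ _ _ _ lw hne hlen hcov hr hch hhead hlast hT1
    · exact step_aux N b c _ _ _ _ lw hne hlen hcov hr hch hhead hlast hT1.swap
    · exact (step_aux N b c _ _ _ _ lw hne hlen hcov hr hch hhead hlast hT1).swap
    · exact (step_aux N b c _ _ _ _ lw hne hlen hcov hr hch hhead hlast hT1.swap).swap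
  rw [e3, e4] at key
  exact key

/-! ### Coprimality in world coordinates -/

lemma isCoprime_of_prime {x y : ℤ}
    (h : ∀ p : ℕ, p.Prime → (p : ℤ) ∣ x → (p : ℤ) ∣ y → False) : IsCoprime x y := by
  rw [Int.isCoprime_iff_gcd_eq_one]
  by_contra hg
  obtain ⟨p, hp, hpd⟩ := Nat.exists_prime_and_dvd hg
  have hpd' : (p : ℤ) ∣ (Int.gcd x y : ℤ) := by exact_mod_cast hpd
  exact h p hp (hpd'.trans (Int.gcd_dvd_left ..)) (hpd'.trans (Int.gcd_dvd_right ..))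

lemma not_prime_dvd_both {x y : ℤ} (h : IsCoprime x y) {p : ℕ} (hp : p.Prime)
    (hx : (p : ℤ) ∣ x) (hy : (p : ℤ) ∣ y) : False :=
  (Nat.prime_iff_prime_int.1 hp).not_isUnit (h.isUnit_of_dvd' hx hy)

lemma world {N q x y : ℤ}
    (hdiv : ∀ p : ℕ, p.Prime → p ≠ 2 → (p : ℤ) < q → (p : ℤ) ∣ N)
    (ho : (x - y) % 2 = 1) (h1 : x - y < q) (h2 : y - x < q) (hc : IsCoprime x y) :
    IsCoprime (N - x) (N - y) := by
  apply isCoprime_of_prime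
  intro p hp hx hy
  have hd : (p : ℤ) ∣ x - y := by
    have := dvd_sub hy hx
    rwa [show N - y - (N - x) = x - y by ring] at this
  have hp2 : p ≠ 2 := by
    rintro rfl
    push_cast at hd
    omega
  have hlt : (p : ℤ) < q := by
    rcases le_total 0 (x - y) with h | h
    · exact lt_of_le_of_lt (Int.le_of_dvd (by omega) hd) h1
    · exact lt_of_le_of_lt (Int.le_of_dvd (by omega) ((dvd_neg.2 hd))) (by omega)
  have hN := hdiv p hp hp2 hlt
  exact not_prime_dvd_both hc hp ((dvd_sub_right hN).1 hx) ((dvd_sub_right hN).1 hy)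

/-- Coprimality for blocks with fixed residue modulo 210. -/
lemma world210 {N x y : ℤ} (hN : (210 : ℤ) ∣ N) (hd : (x - y) ∣ 210 ^ 3) (hc : Int.gcd x y = 1) :
    IsCoprime (N - x) (N - y) := by
  apply isCoprime_of_prime
  intro p hp hx hy
  have hd' : (p : ℤ) ∣ x - y := by
    have := dvd_sub hy hx
    rwa [show N - y - (N - x) = x - y by ring] at this
  have hN : (p : ℤ) ∣ N :=
    ((Nat.prime_iff_prime_int.1 hp).dvd_of_dvd_pow (hd'.trans hd)).trans hN
  exact not_prime_dvd_both (Int.isCoprime_iff_gcd_eq_one.2 hc) hp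
    ((dvd_sub_right hN).1 hx) ((dvd_sub_right hN).1 hy)

/-- Bezout certificates with value a power of two. -/
lemma cop2 {x y : ℤ} (α β : ℤ) (k : ℕ) (ho : (x - y) % 2 = 1) (h : α * x + β * y = 2 ^ k) :
    IsCoprime x y := by
  apply isCoprime_of_prime
  intro p hp hx hy
  have h2 : (p : ℤ) ∣ 2 ^ k := h ▸ dvd_add (hx.mul_left α) (hy.mul_left β)
  have h3 : (p : ℤ) ∣ 2 := (Nat.prime_iff_prime_int.1 hp).dvd_of_dvd_pow h2
  have h4 : p = 2 := (Nat.prime_dvd_prime_iff_eq hp Nat.prime_two).1 (by exact_mod_cast h3)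
  subst h4
  push_cast at hx hy
  omega

/-- Bezout certificates with value a power of two times `q`. -/
lemma copq {q x y : ℤ} (hq : Prime q) (α β : ℤ) (k e : ℕ) (ho : (x - y) % 2 = 1)
    (h : α * x + β * y = 2 ^ k * q ^ e)
    (hxy : (x ≠ 0 ∧ x < q ∧ -q < x) ∨ (y ≠ 0 ∧ y < q ∧ -q < y)) :
    IsCoprime x y := by
  apply isCoprime_of_prime
  intro p hp hx hy
  have hpp := Nat.prime_iff_prime_int.1 hp
  have h2 : (p : ℤ) ∣ 2 ^ k * q ^ e := h ▸ dvd_add (hx.mul_left α) (hy.mul_left β)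
  rcases hpp.dvd_or_dvd h2 with h2 | h2
  · have h3 : (p : ℤ) ∣ 2 := hpp.dvd_of_dvd_pow h2
    have h4 : p = 2 := (Nat.prime_dvd_prime_iff_eq hp Nat.prime_two).1 (by exact_mod_cast h3)
    subst h4
    push_cast at hx hy
    omega
  · have h3 : (p : ℤ) ∣ q := hpp.dvd_of_dvd_pow h2
    have h4 : q ∣ (p : ℤ) := (hpp.associated_of_dvd hq h3).symm.dvd
    have key : ∀ z : ℤ, q ∣ z → z ≠ 0 → z < q → -q < z → False := by
      intro z hz h0 h1 h2
      exact h0 (Int.eq_zero_of_abs_lt_dvd hz (abs_lt.2 ⟨h2, h1⟩))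
    rcases hxy with h | h
    · exact key x (h4.trans hx) h.1 h.2.1 h.2.2
    · exact key y (h4.trans hy) h.1 h.2.1 h.2.2

/-! ### Folds -/

/-- Columns `(q - i, i)` for `i = a, a + s, …, a + s n`. -/
def fold (q a s : ℤ) (n : ℕ) : List (ℤ × ℤ) :=
  (List.range (n + 1)).map (fun i : ℕ => (q - (a + s * i), a + s * i))

lemma fold_head (q a s : ℤ) (n : ℕ) : (fold q a s n).head? = some (q - a, a) := by
  simp [fold, List.range_succ_eq_map]

lemma fold_last (q a s : ℤ) (n : ℕ) :
    (fold q a s n).getLast? = some (q - (a + s * n), a + s * n) := by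
  simp [fold, List.range_succ]

lemma fold_ne (q a s : ℤ) (n : ℕ) : fold q a s n ≠ [] := by
  simp [fold, List.range_succ]

lemma fold_len (q a s : ℤ) (n : ℕ) : (fold q a s n).length = n + 1 := by simp [fold]

lemma mem_fold {q a s : ℤ} {n : ℕ} {p : ℤ × ℤ} :
    p ∈ fold q a s n ↔ ∃ i : ℕ, i ≤ n ∧ p = (q - (a + s * i), a + s * i) := by
  simp only [fold, List.mem_map, List.mem_range, Nat.lt_succ_iff]
  constructor <;> (rintro ⟨i, hi, h⟩; exact ⟨i, hi, h.symm⟩)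

lemma hard_step {N q : ℤ} (hq : Prime q) (ho : q % 2 = 1)
    (hdiv : ∀ p : ℕ, p.Prime → p ≠ 2 → (p : ℤ) < q → (p : ℤ) ∣ N)
    (b c a s a' : ℤ) (hs : s = 1 ∨ s = -1) (n : ℕ) (hn : s * n = a' - a)
    (ha : 0 < a ∧ a < q) (ha' : 0 < a' ∧ a' < q)
    (pre post : List (ℤ × ℤ)) (J : ℤ × ℤ) (u : ℤ × ℤ) (pre' : List (ℤ × ℤ)) (hpre : pre = u :: pre')
    (hlen : 2 * ((pre.length : ℤ) + n + 1 + post.length) = b + 1 + c)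
    (hcov : ∀ x, -c ≤ x → x ≤ b → (∃ p ∈ pre, x = p.1 ∨ x = p.2) ∨
      (∃ p ∈ post, x = p.1 ∨ x = p.2) ∨ (a ≤ x ∧ x ≤ a') ∨ (a' ≤ x ∧ x ≤ a) ∨
      (a ≤ q - x ∧ q - x ≤ a') ∨ (a' ≤ q - x ∧ q - x ≤ a))
    (hr1 : ∀ p ∈ pre, IsCoprime (N - p.1) (N - p.2))
    (hr2 : ∀ p ∈ post, IsCoprime (N - p.1) (N - p.2))
    (hch1 : (pre ++ [(q - a, a)]).IsChain (WR N))
    (hch2 : ((q - a', a') :: (post ++ [J])).IsChain (WR N))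
    (hhead : u = (-c, -c + 1) ∨ u = (-c + 1, -c))
    (hJ : J = (b + 1, b + 2) ∨ J = (b + 2, b + 1))
    (hT : LadT (N - b - 1)) : LadT (N + c) := by
  have hfi : ∀ i : ℕ, i ≤ n → 0 < a + s * i ∧ a + s * i < q := by
    intro i hi
    rcases hs with rfl | rfl <;> omega
  have hrf : ∀ p ∈ fold q a s n, IsCoprime (N - p.1) (N - p.2) := by
    intro p hp
    obtain ⟨i, hi, rfl⟩ := mem_fold.1 hp
    have := hfi i hi
    simp only
    generalize a + s * i = z at this
    apply world hdiv (by omega) (by omega) (by omega)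
    exact copq hq 1 1 0 1 (by omega) (by ring) (Or.inr (by omega))
  have hchf : (fold q a s n).IsChain (WR N) := by
    unfold fold
    rw [List.isChain_map, List.isChain_range]
    intro i hi
    have h1 := hfi i (by omega)
    have h2 := hfi (i + 1) (by omega)
    have h3 : a + s * ((i + 1 : ℕ) : ℤ) = (a + s * i) + s := by push_cast; ring
    rw [h3] at h2 ⊢
    generalize a + s * i = z at *
    refine ⟨?_, ?_⟩ <;> refine world hdiv ?_ ?_ ?_ ?_ <;> dsimp only
    any_goals (rcases hs with rfl | rfl <;> omega)
    · rcases hs with rfl | rfl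
      · exact cop2 1 (-1) 0 (by omega) (by ring)
      · exact cop2 (-1) 1 0 (by omega) (by ring)
    · rcases hs with rfl | rfl
      · exact cop2 (-1) 1 0 (by omega) (by ring)
      · exact cop2 1 (-1) 0 (by omega) (by ring)
  have hend : a + s * n = a' := by omega
  have hlst := fold_last q a s n
  rw [hend] at hlst
  rw [List.isChain_append] at hch1
  rw [List.isChain_cons, List.isChain_append] at hch2
  refine ladT_step N b c (pre ++ (fold q a s n ++ post)) ?_ ?_ ?_ ?_ ?_ ?_ ?_ hT
  · simp [hpre]
  · simp only [List.length_append, fold_len]; push_cast; linarith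
  · intro x hx hx'
    rcases hcov x hx hx' with ⟨p, hp, h⟩ | ⟨p, hp, h⟩ | h
    · exact ⟨p, List.mem_append_left _ hp, h⟩
    · exact ⟨p, List.mem_append_right _ (List.mem_append_right _ hp), h⟩
    · have : ∃ i : ℕ, i ≤ n ∧ (x = q - (a + s * i) ∨ x = a + s * i) := by
        rcases hs with rfl | rfl
        · rcases h with h | h | h | h
          · exact ⟨(x - a).toNat, by omega, by omega⟩
          · exact ⟨(x - a).toNat, by omega, by omega⟩
          · exact ⟨(q - x - a).toNat, by omega, by omega⟩
          · exact ⟨(q - x - a).toNat, by omega, by omega⟩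
        · rcases h with h | h | h | h
          · exact ⟨(a - x).toNat, by omega, by omega⟩
          · exact ⟨(a - x).toNat, by omega, by omega⟩
          · exact ⟨(a - (q - x)).toNat, by omega, by omega⟩
          · exact ⟨(a - (q - x)).toNat, by omega, by omega⟩
      obtain ⟨i, hi, h⟩ := this
      exact ⟨_, List.mem_append_right _ (List.mem_append_left _ (mem_fold.2 ⟨i, hi, rfl⟩)), h⟩
  · intro p hp
    rcases List.mem_append.1 hp with hp | hp
    · exact hr1 p hp
    rcases List.mem_append.1 hp with hp | hp
    · exact hrf p hp
    · exact hr2 p hp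
  · rw [List.isChain_append, List.isChain_append]
    refine ⟨hch1.1, ⟨hchf, hch2.2.1, ?_⟩, ?_⟩
    · intro x hx y hy
      rw [hlst] at hx
      simp only [Option.mem_def, Option.some.injEq] at hx
      subst hx
      apply hch2.1
      rw [List.head?_append]
      simp only [Option.mem_def] at hy
      rw [hy]; rfl
    · intro x hx y hy
      rw [List.head?_append, fold_head] at hy
      simp only [Option.some_or, Option.mem_def, Option.some.injEq] at hy
      subst hy
      exact hch1.2.2 x hx _ (by simp)
  · subst hpre
    rcases hhead with h | h
    · left; intro p hp; simp at hp; rw [← hp, h]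
    · right; intro p hp; simp at hp; rw [← hp, h]
  · have : ∀ p ∈ (pre ++ (fold q a s n ++ post)).getLast?, WR N p J := by
      intro p hp
      rw [List.getLast?_append, List.getLast?_append, hlst] at hp
      cases hpo : post.getLast? with
      | none =>
        have : post = [] := List.getLast?_eq_none_iff.1 hpo
        subst this
        simp at hp
        subst hp
        exact hch2.1 J (by simp)
      | some t =>
        rw [hpo] at hp
        simp at hp
        subst hp
        exact hch2.2.2.2 _ (by simp [hpo]) _ (by simp)
    rcases hJ with h | h
    · left; rw [← h]; exact this
    · right; rw [← h]; exact this

lemma gadget_0_1 {N q m j : ℤ} (hq : Prime q) (hq0 : 11 ≤ q)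
    (hqm : q = 2 * m + 1) (hm : m = 2 * j)
    (hdiv : ∀ p : ℕ, p.Prime → p ≠ 2 → (p : ℤ) < q → (p : ℤ) ∣ N)
    (hNq : IsCoprime (N - 0) (N - q)) (hT : LadT (N - q - 1)) : LadT (N + 0) := by
  refine hard_step hq (by omega) hdiv q 0 2 1 (m - 1) (by simp) (m - 1 - 2).toNat
    (by omega) (by omega) (by omega) [(0, 1), (q, q - 1), (m, m + 1)]
    [] (q + 2, q + 1) _ _ rfl ?_ ?_ ?_ ?_ ?_ ?_ (by norm_num) (by simp) hT
  · simp only [List.length_cons, List.length_nil]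
    omega
  · intro x hx hx'
    simp only [List.mem_cons, List.not_mem_nil, or_false, exists_eq_or_imp, exists_eq_left,
      false_and, exists_false, false_or]
    omega
  all_goals
    simp only [List.mem_cons, List.not_mem_nil, or_false, forall_eq_or_imp, forall_eq,
      List.cons_append, List.nil_append, List.isChain_cons_cons, List.isChain_singleton, WR,
      and_true, false_imp_iff, implies_true]
    try trivial
    try repeat' apply And.intro
    all_goals
      first
      | trivial
      | exact hNq
      | exact hNq.symm
      | (refine world hdiv (by omega) (by omega) (by omega) ?_
         first
         | exact cop2 2 (-1) 0 (by omega) (by omega)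
         | exact cop2 1 (-1) 0 (by omega) (by omega)
         | exact cop2 (-1) 1 0 (by omega) (by omega)
         | exact cop2 1 0 0 (by omega) (by omega)
         | exact cop2 1 (-2) 0 (by omega) (by omega)
         | exact cop2 (-1) 2 1 (by omega) (by omega)
         | exact cop2 0 1 1 (by omega) (by omega)
         | exact cop2 (-2) 1 2 (by omega) (by omega)
         | exact Int.isCoprime_iff_gcd_eq_one.2 (by norm_num))

lemma gadget_0_3 {N q m j : ℤ} (hq : Prime q) (hq0 : 11 ≤ q)
    (hqm : q = 2 * m + 1) (hm : m = 2 * j + 1)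
    (hdiv : ∀ p : ℕ, p.Prime → p ≠ 2 → (p : ℤ) < q → (p : ℤ) ∣ N)
    (hNq : IsCoprime (N - 0) (N - q)) (hT : LadT (N - q - 1)) : LadT (N + 0) := by
  refine hard_step hq (by omega) hdiv q 0 2 1 (m) (by simp) (m - 2).toNat
    (by omega) (by omega) (by omega) [(1, 0), (q - 1, q)]
    [] (q + 2, q + 1) _ _ rfl ?_ ?_ ?_ ?_ ?_ ?_ (by norm_num) (by simp) hT
  · simp only [List.length_cons, List.length_nil]
    omega
  · intro x hx hx'
    simp only [List.mem_cons, List.not_mem_nil, or_false, exists_eq_or_imp, exists_eq_left,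
      false_and, exists_false, false_or]
    omega
  all_goals
    simp only [List.mem_cons, List.not_mem_nil, or_false, forall_eq_or_imp, forall_eq,
      List.cons_append, List.nil_append, List.isChain_cons_cons, List.isChain_singleton, WR,
      and_true, false_imp_iff, implies_true]
    try trivial
    try repeat' apply And.intro
    all_goals
      first
      | trivial
      | exact hNq
      | exact hNq.symm
      | (refine world hdiv (by omega) (by omega) (by omega) ?_
         first
         | exact cop2 (-1) 1 0 (by omega) (by omega)
         | exact cop2 1 0 0 (by omega) (by omega)
         | exact cop2 1 (-1) 0 (by omega) (by omega)
         | exact cop2 0 1 1 (by omega) (by omega)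
         | exact cop2 (-2) 1 0 (by omega) (by omega)
         | exact cop2 (-2) 1 1 (by omega) (by omega)
         | exact Int.isCoprime_iff_gcd_eq_one.2 (by norm_num))

lemma gadget_6_1 {N q m j : ℤ} (hq : Prime q) (hq0 : 11 ≤ q)
    (hqm : q = 2 * m + 1) (hm : m = 2 * j)
    (hdiv : ∀ p : ℕ, p.Prime → p ≠ 2 → (p : ℤ) < q → (p : ℤ) ∣ N)
    (hNq : IsCoprime (N - 0) (N - q)) (hT : LadT (N - q - 1)) : LadT (N + 6) := by
  refine hard_step hq (by omega) hdiv q 6 4 1 (m - 1) (by simp) (m - 1 - 4).toNat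
    (by omega) (by omega) (by omega) [(-5, -6), (-4, -1), (1, 0), (q - 1, q), (q - 2, m), (q - 3, m + 1), (3, -2), (2, -3)]
    [] (q + 2, q + 1) _ _ rfl ?_ ?_ ?_ ?_ ?_ ?_ (by norm_num) (by simp) hT
  · simp only [List.length_cons, List.length_nil]
    omega
  · intro x hx hx'
    simp only [List.mem_cons, List.not_mem_nil, or_false, exists_eq_or_imp, exists_eq_left,
      false_and, exists_false, false_or]
    omega
  all_goals
    simp only [List.mem_cons, List.not_mem_nil, or_false, forall_eq_or_imp, forall_eq,
      List.cons_append, List.nil_append, List.isChain_cons_cons, List.isChain_singleton, WR,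
      and_true, false_imp_iff, implies_true]
    try trivial
    try repeat' apply And.intro
    all_goals
      first
      | trivial
      | exact hNq
      | exact hNq.symm
      | (refine world hdiv (by omega) (by omega) (by omega) ?_
         first
         | exact cop2 (-1) 1 0 (by omega) (by omega)
         | exact cop2 1 (-1) 0 (by omega) (by omega)
         | exact cop2 (-1) 2 0 (by omega) (by omega)
         | exact cop2 (-1) 2 2 (by omega) (by omega)
         | exact cop2 1 0 0 (by omega) (by omega)
         | exact cop2 1 (-2) 0 (by omega) (by omega)
         | exact cop2 0 (-1) 1 (by omega) (by omega)
         | exact cop2 1 0 1 (by omega) (by omega)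
         | exact cop2 2 (-1) 0 (by omega) (by omega)
         | exact cop2 (-2) 1 2 (by omega) (by omega)
         | exact copq hq 1 1 0 1 (by omega) (by linarith) (by omega)
         | exact Int.isCoprime_iff_gcd_eq_one.2 (by norm_num))

lemma gadget_6_3 {N q m j : ℤ} (hq : Prime q) (hq0 : 11 ≤ q)
    (hqm : q = 2 * m + 1) (hm : m = 2 * j + 1)
    (hdiv : ∀ p : ℕ, p.Prime → p ≠ 2 → (p : ℤ) < q → (p : ℤ) ∣ N)
    (hNq : IsCoprime (N - 0) (N - q)) (hT : LadT (N - q - 1)) : LadT (N + 6) := by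
  refine hard_step hq (by omega) hdiv q 6 4 1 (m) (by simp) (m - 4).toNat
    (by omega) (by omega) (by omega) [(-6, -5), (-1, -4), (0, 1), (q, q - 1), (q - 3, q - 2), (3, 2), (-2, -3)]
    [] (q + 2, q + 1) _ _ rfl ?_ ?_ ?_ ?_ ?_ ?_ (by norm_num) (by simp) hT
  · simp only [List.length_cons, List.length_nil]
    omega
  · intro x hx hx'
    simp only [List.mem_cons, List.not_mem_nil, or_false, exists_eq_or_imp, exists_eq_left,
      false_and, exists_false, false_or]
    omega
  all_goals
    simp only [List.mem_cons, List.not_mem_nil, or_false, forall_eq_or_imp, forall_eq,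
      List.cons_append, List.nil_append, List.isChain_cons_cons, List.isChain_singleton, WR,
      and_true, false_imp_iff, implies_true]
    try trivial
    try repeat' apply And.intro
    all_goals
      first
      | trivial
      | exact hNq
      | exact hNq.symm
      | (refine world hdiv (by omega) (by omega) (by omega) ?_
         first
         | exact cop2 1 (-1) 0 (by omega) (by omega)
         | exact cop2 (-1) 1 0 (by omega) (by omega)
         | exact cop2 1 0 0 (by omega) (by omega)
         | exact cop2 0 1 1 (by omega) (by omega)
         | exact cop2 (-1) 0 1 (by omega) (by omega)
         | exact cop2 (-2) 1 0 (by omega) (by omega)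
         | exact cop2 (-2) 1 1 (by omega) (by omega)
         | exact copq hq 1 0 0 1 (by omega) (by linarith) (by omega)
         | exact copq hq 1 1 0 1 (by omega) (by linarith) (by omega)
         | exact Int.isCoprime_iff_gcd_eq_one.2 (by norm_num))

lemma gadget_3_1 {N q m j : ℤ} (hq : Prime q) (hq0 : 11 ≤ q)
    (hqm : q = 2 * m + 1) (hm : m = 2 * j)
    (hdiv : ∀ p : ℕ, p.Prime → p ≠ 2 → (p : ℤ) < q → (p : ℤ) ∣ N)
    (hNq : IsCoprime (N - 0) (N - q)) (hT : LadT (N - (q + 1) - 1)) : LadT (N + 3) := by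
  refine hard_step hq (by omega) hdiv (q + 1) 3 1 1 (m - 2) (by simp) (m - 2 - 1).toNat
    (by omega) (by omega) (by omega) [(-2, -3), (m + 1, m + 2), (m, -1), (q, 0)]
    [(q + 1, m - 1)] (q + 1 + 1, q + 1 + 2) _ _ rfl ?_ ?_ ?_ ?_ ?_ ?_ (by norm_num) (by simp) hT
  · simp only [List.length_cons, List.length_nil]
    omega
  · intro x hx hx'
    simp only [List.mem_cons, List.not_mem_nil, or_false, exists_eq_or_imp, exists_eq_left,
      false_and, exists_false, false_or]
    omega
  all_goals
    simp only [List.mem_cons, List.not_mem_nil, or_false, forall_eq_or_imp, forall_eq,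
      List.cons_append, List.nil_append, List.isChain_cons_cons, List.isChain_singleton, WR,
      and_true, false_imp_iff, implies_true]
    try trivial
    try repeat' apply And.intro
    all_goals
      first
      | trivial
      | exact hNq
      | exact hNq.symm
      | (refine world hdiv (by omega) (by omega) (by omega) ?_
         first
         | exact cop2 (-1) 1 0 (by omega) (by omega)
         | exact cop2 0 (-1) 0 (by omega) (by omega)
         | exact cop2 1 (-1) 0 (by omega) (by omega)
         | exact cop2 1 (-2) 2 (by omega) (by omega)
         | exact cop2 (-1) 0 1 (by omega) (by omega)
         | exact cop2 (-2) 1 0 (by omega) (by omega)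
         | exact cop2 2 (-1) 2 (by omega) (by omega)
         | exact copq hq 1 2 0 1 (by omega) (by linarith) (by omega)
         | exact copq hq 2 1 1 1 (by omega) (by linarith) (by omega)
         | exact Int.isCoprime_iff_gcd_eq_one.2 (by norm_num))

lemma gadget_3_3 {N q m j : ℤ} (hq : Prime q) (hq0 : 11 ≤ q)
    (hqm : q = 2 * m + 1) (hm : m = 2 * j + 1)
    (hdiv : ∀ p : ℕ, p.Prime → p ≠ 2 → (p : ℤ) < q → (p : ℤ) ∣ N)
    (hNq : IsCoprime (N - 0) (N - q)) (hT : LadT (N - (q + 1) - 1)) : LadT (N + 3) := by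
  refine hard_step hq (by omega) hdiv (q + 1) 3 4 1 (m - 1) (by simp) (m - 1 - 4).toNat
    (by omega) (by omega) (by omega) [(-3, -2), (2, 3)]
    [(q - 1, q - 2), (1, q - 3), (0, -1), (q, m + 1), (q + 1, m)] (q + 1 + 1, q + 1 + 2) _ _ rfl ?_ ?_ ?_ ?_ ?_ ?_ (by norm_num) (by simp) hT
  · simp only [List.length_cons, List.length_nil]
    omega
  · intro x hx hx'
    simp only [List.mem_cons, List.not_mem_nil, or_false, exists_eq_or_imp, exists_eq_left,
      false_and, exists_false, false_or]
    omega
  all_goals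
    simp only [List.mem_cons, List.not_mem_nil, or_false, forall_eq_or_imp, forall_eq,
      List.cons_append, List.nil_append, List.isChain_cons_cons, List.isChain_singleton, WR,
      and_true, false_imp_iff, implies_true]
    try trivial
    try repeat' apply And.intro
    all_goals
      first
      | trivial
      | exact hNq
      | exact hNq.symm
      | (refine world hdiv (by omega) (by omega) (by omega) ?_
         first
         | exact cop2 1 (-1) 0 (by omega) (by omega)
         | exact cop2 (-1) 1 0 (by omega) (by omega)
         | exact cop2 1 0 0 (by omega) (by omega)
         | exact cop2 (-1) 2 0 (by omega) (by omega)
         | exact cop2 1 (-2) 1 (by omega) (by omega)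
         | exact cop2 1 0 1 (by omega) (by omega)
         | exact cop2 2 (-1) 2 (by omega) (by omega)
         | exact cop2 (-2) 1 0 (by omega) (by omega)
         | exact cop2 0 1 0 (by omega) (by omega)
         | exact cop2 0 (-1) 0 (by omega) (by omega)
         | exact cop2 (-1) 0 0 (by omega) (by omega)
         | exact cop2 (-2) 1 2 (by omega) (by omega)
         | exact Int.isCoprime_iff_gcd_eq_one.2 (by norm_num))

lemma gadget_9_1 {N q m j : ℤ} (hq : Prime q) (hq0 : 11 ≤ q)
    (hqm : q = 2 * m + 1) (hm : m = 2 * j)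
    (hdiv : ∀ p : ℕ, p.Prime → p ≠ 2 → (p : ℤ) < q → (p : ℤ) ∣ N)
    (hNq : IsCoprime (N - 0) (N - q)) (hT : LadT (N - (q + 1) - 1)) : LadT (N + 9) := by
  refine hard_step hq (by omega) hdiv (q + 1) 9 (m - 3) (-1) (1) (by simp) (m - 4).toNat
    (by omega) (by omega) (by omega) [(-8, -9), (-3, -4), (-2, -7), (-5, -6), (m - 2, m - 1), (m + 3, q + 1)]
    [(q, 0), (m, -1), (m + 1, m + 2)] (q + 1 + 2, q + 1 + 1) _ _ rfl ?_ ?_ ?_ ?_ ?_ ?_ (by norm_num) (by simp) hT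
  · simp only [List.length_cons, List.length_nil]
    omega
  · intro x hx hx'
    simp only [List.mem_cons, List.not_mem_nil, or_false, exists_eq_or_imp, exists_eq_left,
      false_and, exists_false, false_or]
    omega
  all_goals
    simp only [List.mem_cons, List.not_mem_nil, or_false, forall_eq_or_imp, forall_eq,
      List.cons_append, List.nil_append, List.isChain_cons_cons, List.isChain_singleton, WR,
      and_true, false_imp_iff, implies_true]
    try trivial
    try repeat' apply And.intro
    all_goals
      first
      | trivial
      | exact hNq
      | exact hNq.symm
      | (refine world hdiv (by omega) (by omega) (by omega) ?_
         first
         | exact cop2 (-1) 1 0 (by omega) (by omega)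
         | exact cop2 2 (-1) 2 (by omega) (by omega)
         | exact cop2 0 (-1) 0 (by omega) (by omega)
         | exact cop2 (-2) 1 2 (by omega) (by omega)
         | exact cop2 1 (-2) 3 (by omega) (by omega)
         | exact cop2 1 (-2) 0 (by omega) (by omega)
         | exact cop2 (-1) 0 0 (by omega) (by omega)
         | exact cop2 (-2) 1 1 (by omega) (by omega)
         | exact cop2 2 (-1) 0 (by omega) (by omega)
         | exact copq hq (-1) 2 0 1 (by omega) (by linarith) (by omega)
         | exact copq hq (-1) 4 1 1 (by omega) (by linarith) (by omega)
         | exact copq hq 1 1 0 1 (by omega) (by linarith) (by omega)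
         | exact Int.isCoprime_iff_gcd_eq_one.2 (by norm_num))

lemma gadget_9_3 {N q m j : ℤ} (hq : Prime q) (hq0 : 11 ≤ q) (hq19 : 19 ≤ q)
    (hqm : q = 2 * m + 1) (hm : m = 2 * j + 1)
    (hdiv : ∀ p : ℕ, p.Prime → p ≠ 2 → (p : ℤ) < q → (p : ℤ) ∣ N)
    (hNq : IsCoprime (N - 0) (N - q)) (hT : LadT (N - (q + 1) - 1)) : LadT (N + 9) := by
  refine hard_step hq (by omega) hdiv (q + 1) 9 2 1 (m - 2) (by simp) (m - 2 - 2).toNat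
    (by omega) (by omega) (by omega) [(-9, -8), (m - 1, -3)]
    [(-5, -4), (-6, -7), (-1, -2), (0, 1), (q, q - 1), (m + 1, m + 2), (m, q + 1)] (q + 1 + 2, q + 1 + 1) _ _ rfl ?_ ?_ ?_ ?_ ?_ ?_ (by norm_num) (by simp) hT
  · simp only [List.length_cons, List.length_nil]
    omega
  · intro x hx hx'
    simp only [List.mem_cons, List.not_mem_nil, or_false, exists_eq_or_imp, exists_eq_left,
      false_and, exists_false, false_or]
    omega
  all_goals
    simp only [List.mem_cons, List.not_mem_nil, or_false, forall_eq_or_imp, forall_eq,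
      List.cons_append, List.nil_append, List.isChain_cons_cons, List.isChain_singleton, WR,
      and_true, false_imp_iff, implies_true]
    try trivial
    try repeat' apply And.intro
    all_goals
      first
      | trivial
      | exact hNq
      | exact hNq.symm
      | (refine world hdiv (by omega) (by omega) (by omega) ?_
         first
         | exact cop2 1 (-1) 0 (by omega) (by omega)
         | exact cop2 (-1) 1 0 (by omega) (by omega)
         | exact cop2 (-2) 1 1 (by omega) (by omega)
         | exact cop2 (-2) 1 0 (by omega) (by omega)
         | exact cop2 0 (-1) 2 (by omega) (by omega)
         | exact cop2 1 0 0 (by omega) (by omega)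
         | exact cop2 (-1) 2 0 (by omega) (by omega)
         | exact cop2 (-1) 2 2 (by omega) (by omega)
         | exact cop2 2 (-1) 1 (by omega) (by omega)
         | exact cop2 (-2) 1 2 (by omega) (by omega)
         | exact copq hq 2 (-1) 0 1 (by omega) (by linarith) (by omega)
         | exact copq hq 2 1 0 1 (by omega) (by linarith) (by omega)
         | exact copq hq (-1) (4 * m + 8) 0 2 (by omega) (by rw [hqm]; ring1) (by omega)
         | exact Int.isCoprime_iff_gcd_eq_one.2 (by norm_num))

/-- The special case `q = 11`. -/
lemma gadget_9_eleven {N : ℤ} (hq : Prime (11 : ℤ))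
    (hdiv : ∀ p : ℕ, p.Prime → p ≠ 2 → (p : ℤ) < 11 → (p : ℤ) ∣ N)
    (hNq : IsCoprime (N - 0) (N - 11)) (hT : LadT (N - (11 + 1) - 1)) : LadT (N + 9) := by
  refine hard_step hq (by omega) hdiv (11 + 1) 9 3 1 3 (by simp) 0
    (by omega) (by omega) (by omega)
    [(-9, -8), (-4, -7), (-3, -2), (2, -5), (-1, -6), (0, 1), (11, 6), (12, 5), (7, 4)]
    [(9, 10)] (11 + 1 + 2, 11 + 1 + 1) _ _ rfl ?_ ?_ ?_ ?_ ?_ ?_ (by norm_num) (by simp) hT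
  · simp only [List.length_cons, List.length_nil]
    omega
  · intro x hx hx'
    simp only [List.mem_cons, List.not_mem_nil, or_false, exists_eq_or_imp, exists_eq_left]
    omega
  all_goals
    simp only [List.mem_cons, List.not_mem_nil, or_false, forall_eq_or_imp, forall_eq,
      List.cons_append, List.nil_append, List.isChain_cons_cons, List.isChain_singleton, WR,
      and_true]
    try repeat' apply And.intro
    all_goals
      first
      | exact hNq
      | exact world hdiv (by omega) (by omega) (by omega)
          (Int.isCoprime_iff_gcd_eq_one.2 (by norm_num))

/-! ### Generic residues -/

/-- Offsets of the generic blocks, as a function of `m % 35`, from the old end to the new end. -/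
def blk (r : ℕ) : List (ℤ × ℤ) :=
  if r ∈ [2, 4, 9, 10, 15, 17, 20, 22, 24, 25, 27, 29, 30, 32, 34] then
    [(0, 1), (3, 2), (8, 9), (7, 6), (4, 5), (11, 10)]
  else if r ∈ [3, 7, 8, 13, 23, 28] then
    [(0, 1), (9, 8), (2, 7), (3, 4), (6, 5), (11, 10)]
  else if r = 14 then
    [(0, 1), (9, 2), (8, 3), (7, 4), (6, 5), (11, 10)]
  else if r ∈ [6, 16, 21, 26, 31] then
    [(0, 1), (3, 2), (8, 7), (9, 14), (6, 15), (5, 10), (4, 11), (13, 12), (16, 17)]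
  else if r = 33 then
    [(0, 1), (5, 4), (6, 3), (9, 2), (8, 7), (13, 14), (10, 15), (11, 12), (16, 17)]
  else
    [(0, 1), (3, 2), (8, 9), (13, 14), (6, 15), (5, 12), (4, 11), (7, 10), (16, 17)]

/-- First value of the block minus `N`. -/
def blkS (r : ℕ) : ℤ := 6 * r + 1 - 2 * (blk r).length

/-- The block in world coordinates, new end first. -/
def blkW (r : ℕ) : List (ℤ × ℤ) :=
  ((blk r).map fun p => (-(blkS r + p.1), -(blkS r + p.2))).reverse

/-- Decidable edge condition for blocks. -/
def ckE (x y : ℤ) : Prop := Int.gcd x y = 1 ∧ (x - y) ∣ 210 ^ 3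

instance (x y : ℤ) : Decidable (ckE x y) := inferInstanceAs (Decidable (_ ∧ _))

/-- Decidable column condition for blocks. -/
def ckR (c d : ℤ × ℤ) : Prop := ckE c.1 d.1 ∧ ckE c.2 d.2

instance : DecidableRel ckR := fun _ _ => inferInstanceAs (Decidable (_ ∧ _))

lemma blk_check : ∀ r ∈ List.range 35, r ∉ [0, 1, 18, 19] →
    blkW r ≠ [] ∧ 0 ≤ blkS r ∧ 0 < (blk r).length ∧
    (∀ i ∈ List.range (2 * (blk r).length),
      ∃ p ∈ blkW r, -(blkS r + i) = p.1 ∨ -(blkS r + i) = p.2) ∧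
    (∀ p ∈ blkW r, ckE p.1 p.2) ∧ (blkW r).IsChain ckR ∧
    ((∀ p ∈ (blkW r).head?, p = (-(6 * (r : ℤ)), -(6 * (r : ℤ)) + 1)) ∨
      (∀ p ∈ (blkW r).head?, p = (-(6 * (r : ℤ)) + 1, -(6 * (r : ℤ))))) ∧
    (∀ p ∈ (blkW r).getLast?, ckR p (-(blkS r) + 1, -(blkS r) + 2)) := by
  decide +kernel

lemma ladT_generic (N : ℤ) (hN : (210 : ℤ) ∣ N) (r : ℕ) (hr : r < 35)
    (hr' : r ∉ [0, 1, 18, 19])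
    (hT : LadT (N + (6 * r - 2 * (blk r).length))) : LadT (N + 6 * r) := by
  obtain ⟨h1, h2, h3, h4, h5, h6, h7, h8⟩ := blk_check r (List.mem_range.2 hr) hr'
  have hS : blkS r = 6 * r + 1 - 2 * (blk r).length := rfl
  have hw : (blkW r).length = (blk r).length := by simp [blkW]
  have hR : ∀ c d, ckR c d → WR N c d := fun c d h =>
    ⟨world210 hN h.1.2 h.1.1, world210 hN h.2.2 h.2.1⟩
  refine ladT_step N (-(blkS r)) (6 * r) (blkW r) h1 ?_ ?_ ?_ ?_ h7 ?_ ?_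
  · rw [hw, hS]; ring
  · intro x hx hx'
    have := h4 (-x - blkS r).toNat (List.mem_range.2 (by omega))
    rw [Int.toNat_of_nonneg (by omega)] at this
    obtain ⟨p, hp, h⟩ := this
    exact ⟨p, hp, by omega⟩
  · intro p hp
    exact world210 hN (h5 p hp).2 (h5 p hp).1
  · exact h6.imp hR
  · left
    intro p hp
    exact hR _ _ (h8 p hp)
  · convert hT using 1
    rw [hS]; ring

/-! ### Hard residues -/

lemma exists_q (N : ℤ) (hN : 105 ≤ N) (h105 : (105 : ℤ) ∣ N) :
    ∃ q : ℤ, Prime q ∧ 11 ≤ q ∧ q % 2 = 1 ∧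
      (∀ p : ℕ, p.Prime → p ≠ 2 → (p : ℤ) < q → (p : ℤ) ∣ N) ∧
      IsCoprime (N - 0) (N - q) ∧ q ≤ N - 1 ∧ (N % 2 = 1 → q ≤ N - 2) := by
  have aux : ∀ d : ℤ, 1 < d → d % 2 = 1 → IsCoprime d N →
      ∃ p : ℕ, (p.Prime ∧ p ≠ 2 ∧ ¬ (p : ℤ) ∣ N) ∧ (p : ℤ) ≤ d := by
    intro d hd ho hc
    obtain ⟨p, hp, hpd⟩ := Nat.exists_prime_and_dvd (n := d.natAbs) (by omega)
    have hpd' : (p : ℤ) ∣ d := Int.natCast_dvd.2 hpd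
    refine ⟨p, ⟨hp, ?_, fun h => not_prime_dvd_both hc hp hpd' h⟩, Int.le_of_dvd (by omega) hpd'⟩
    rintro rfl
    push_cast at hpd'
    omega
  have ex : ∃ p : ℕ, (p.Prime ∧ p ≠ 2 ∧ ¬ (p : ℤ) ∣ N) ∧ (p : ℤ) ≤ N - 1 ∧
      (N % 2 = 1 → (p : ℤ) ≤ N - 2) := by
    rcases Int.emod_two_eq_zero_or_one N with h | h
    · obtain ⟨p, hp, hle⟩ := aux (N - 1) (by omega) (by omega) ⟨-1, 1, by ring⟩
      exact ⟨p, hp, hle, by omega⟩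
    · obtain ⟨p, hp, hle⟩ := aux (N - 2) (by omega) (by omega)
        (by
          apply isCoprime_of_prime
          intro p hp h1 h2
          have h3 : (p : ℤ) ∣ 2 := by
            have := dvd_sub h2 h1
            rwa [show N - (N - 2) = 2 by ring] at this
          have h4 : p = 2 :=
            (Nat.prime_dvd_prime_iff_eq hp Nat.prime_two).1 (by exact_mod_cast h3)
          subst h4
          push_cast at h2
          omega)
      exact ⟨p, hp, by omega, fun _ => hle⟩
  obtain ⟨p0, hp0, hle, hle2⟩ := ex
  classical
  have ex' : ∃ p : ℕ, p.Prime ∧ p ≠ 2 ∧ ¬ (p : ℤ) ∣ N := ⟨p0, hp0⟩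
  have hsp := Nat.find_spec ex'
  have hmin : Nat.find ex' ≤ p0 := Nat.find_min' ex' hp0
  have hlt : ∀ p : ℕ, p.Prime → p ≠ 2 → p < Nat.find ex' → (p : ℤ) ∣ N := by
    intro p hp hp2 hpl
    by_contra hd
    exact Nat.find_min ex' hpl ⟨hp, hp2, hd⟩
  generalize Nat.find ex' = q at hsp hmin hlt
  obtain ⟨hq, hq2, hqN⟩ := hsp
  have hqi := Nat.prime_iff_prime_int.1 hq
  have hodd : q % 2 = 1 := hq.eq_two_or_odd.resolve_left hq2
  have h11 : 11 ≤ q := by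
    by_contra h
    have := hq.two_le
    interval_cases q <;> revert hqN hq <;> first | omega | norm_num
  refine ⟨q, hqi, by exact_mod_cast h11, by omega,
    fun p hp hp2 hpl => hlt p hp hp2 (by exact_mod_cast hpl), ?_, by omega, by omega⟩
  have : IsCoprime N (q : ℤ) := ((Prime.coprime_iff_not_dvd hqi).2 hqN).symm
  have h2 := (this.neg_right).add_mul_left_right 1
  rw [sub_zero, show N - (q : ℤ) = -(q : ℤ) + N * 1 by ring]
  exact h2

lemma ladT_hard (N c : ℤ) (hN : 105 ≤ N) (h105 : (105 : ℤ) ∣ N)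
    (hc : (N % 2 = 0 ∧ (c = 0 ∨ c = 6)) ∨ (N % 2 = 1 ∧ (c = 3 ∨ c = 9)))
    (hT : ∀ E, 0 ≤ E → E < N → E % 2 = 0 → LadT E) : LadT (N + c) := by
  obtain ⟨q, hq, hq0, ho, hdiv, hNq, hle, hle2⟩ := exists_q N hN h105
  have hqm : q = 2 * (q / 2) + 1 := by omega
  have hm : q / 2 = 2 * (q / 4) ∨ q / 2 = 2 * (q / 4) + 1 := by omega
  rcases hc with ⟨h2, rfl | rfl⟩ | ⟨h2, rfl | rfl⟩
  · have hT' := hT (N - q - 1) (by omega) (by omega) (by omega)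
    rcases hm with hm | hm
    · exact gadget_0_1 hq hq0 hqm hm hdiv hNq hT'
    · exact gadget_0_3 hq hq0 hqm hm hdiv hNq hT'
  · have hT' := hT (N - q - 1) (by omega) (by omega) (by omega)
    rcases hm with hm | hm
    · exact gadget_6_1 hq hq0 hqm hm hdiv hNq hT'
    · exact gadget_6_3 hq hq0 hqm hm hdiv hNq hT'
  · have hT' := hT (N - (q + 1) - 1) (by omega) (by omega) (by omega)
    rcases hm with hm | hm
    · exact gadget_3_1 hq hq0 hqm hm hdiv hNq hT'
    · exact gadget_3_3 hq hq0 hqm hm hdiv hNq hT'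
  · have hT' := hT (N - (q + 1) - 1) (by omega) (by omega) (by omega)
    rcases hm with hm | hm
    · exact gadget_9_1 hq hq0 hqm hm hdiv hNq hT'
    · by_cases h11 : q = 11
      · subst h11
        exact gadget_9_eleven hq hdiv hNq hT'
      · have h15 : q ≠ 15 := by
          rintro rfl
          revert hq
          rw [show (15 : ℤ) = ((15 : ℕ) : ℤ) by norm_num, ← Nat.prime_iff_prime_int]
          norm_num
        exact gadget_9_3 hq hq0 (by omega) hqm hm hdiv hNq hT'

lemma ladT_six : LadT 6 := by
  refine ⟨[(6, 5), (1, 2), (4, 3)], ?_, ?_, by norm_num, ?_, by simp⟩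
  · simp only [List.mem_cons, List.not_mem_nil, or_false, forall_eq_or_imp, forall_eq,
      Int.isCoprime_iff_gcd_eq_one]
    norm_num
  · simp only [List.isChain_cons_cons, List.isChain_singleton, LadR,
      Int.isCoprime_iff_gcd_eq_one]
    norm_num
  · intro x hx hx'
    simp only [List.mem_cons, List.not_mem_nil, or_false, exists_eq_or_imp, exists_eq_left]
    omega

lemma cop3 {x y : ℤ} (h : x - y = 3) (hx : x % 3 ≠ 0) : IsCoprime x y := by
  apply isCoprime_of_prime
  intro p hp h1 h2
  have h3 : (p : ℤ) ∣ 3 := h ▸ dvd_sub h1 h2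
  have h4 : p = 3 := (Nat.prime_dvd_prime_iff_eq hp Nat.prime_three).1 (by exact_mod_cast h3)
  subst h4
  push_cast at h1
  omega

lemma ladT_all (n : ℕ) : LadT (2 * n) := by
  induction n using Nat.strong_induction_on with
  | _ n ih =>
  have ih' : ∀ E : ℤ, 0 ≤ E → E < 2 * n → E % 2 = 0 → LadT E := by
    intro E h0 h1 h2
    have := ih (E / 2).toNat (by omega)
    rwa [Int.toNat_of_nonneg (by omega), show 2 * (E / 2) = E by omega] at this
  have h3 : n % 3 = 0 ∨ n % 3 = 1 ∨ n % 3 = 2 := by omega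
  rcases h3 with h3 | h3 | h3
  · obtain ⟨m, rfl⟩ := Nat.dvd_of_mod_eq_zero h3
    rcases Nat.eq_zero_or_pos m with rfl | hm
    · refine ⟨[], by simp, by simp, by simp, ?_, by simp⟩
      intro x h1 h2
      push_cast at h2
      omega
    by_cases hm1 : m = 1
    · subst hm1
      exact ladT_six
    have hdm : m = 35 * (m / 35) + m % 35 := by omega
    by_cases hr : m % 35 ∈ [0, 1, 18, 19]
    · simp only [List.mem_cons, List.not_mem_nil, or_false] at hr
      have key : ∃ N c : ℤ, 105 ≤ N ∧ (105 : ℤ) ∣ N ∧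
          ((N % 2 = 0 ∧ (c = 0 ∨ c = 6)) ∨ (N % 2 = 1 ∧ (c = 3 ∨ c = 9))) ∧
          N + c = 2 * ((3 * m : ℕ) : ℤ) := by
        rcases hr with h | h | h | h
        · exact ⟨210 * (m / 35 : ℕ), 0, by omega, by omega, by omega, by omega⟩
        · exact ⟨210 * (m / 35 : ℕ), 6, by omega, by omega, by omega, by omega⟩
        · exact ⟨210 * (m / 35 : ℕ) + 105, 3, by omega, by omega, by omega, by omega⟩
        · exact ⟨210 * (m / 35 : ℕ) + 105, 9, by omega, by omega, by omega, by omega⟩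
      obtain ⟨N, c, h1, h2, hc, he⟩ := key
      rw [← he]
      exact ladT_hard N c h1 h2 hc fun E hE0 hE1 hE2 => ih' E hE0 (by omega) hE2
    · have hlt : m % 35 < 35 := Nat.mod_lt _ (by norm_num)
      obtain ⟨-, hS, hl, -⟩ := blk_check _ (List.mem_range.2 hlt) hr
      unfold blkS at hS
      have := ladT_generic (210 * (m / 35 : ℕ)) (by omega) (m % 35) hlt hr
        (ih' _ (by omega) (by omega) (by omega))
      convert this using 1
      omega
  · have hT := ih' (2 * n - 2) (by omega) (by omega) (by omega)
    have h := ladT_step (2 * n - 2) (-1) 2 [(-2, -1)] (by simp) (by simp) ?_ ?_ (by simp)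
      (by simp) ?_ (by convert hT using 1; ring)
    · convert h using 1; ring
    · intro x hx hx'
      simp only [List.mem_cons, List.not_mem_nil, or_false, exists_eq_left]
      omega
    · simp only [List.mem_cons, List.not_mem_nil, or_false, forall_eq]
      exact cop2 1 (-1) 0 (by omega) (by ring)
    · right
      simp only [List.getLast?_singleton, Option.mem_def, Option.some.injEq, forall_eq', WR]
      exact ⟨cop3 (by ring) (by omega), cop2 1 (-1) 0 (by omega) (by ring)⟩
  · have hT := ih' (2 * n - 4) (by omega) (by omega) (by omega)
    have h := ladT_step (2 * n - 4) (-1) 4 [(-4, -3), (-1, -2)] (by simp) (by simp) ?_ ?_ ?_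
      (by simp) ?_ (by convert hT using 1; ring)
    · convert h using 1; ring
    · intro x hx hx'
      simp only [List.mem_cons, List.not_mem_nil, or_false, exists_eq_or_imp, exists_eq_left]
      omega
    · simp only [List.mem_cons, List.not_mem_nil, or_false, forall_eq_or_imp, forall_eq]
      exact ⟨cop2 1 (-1) 0 (by omega) (by ring), cop2 (-1) 1 0 (by omega) (by ring)⟩
    · simp only [List.isChain_cons_cons, List.isChain_singleton, WR, and_true]
      exact ⟨cop3 (by ring) (by omega), cop2 1 (-1) 0 (by omega) (by ring)⟩
    · left
      simp only [List.getLast?_cons_cons, List.getLast?_singleton, Option.mem_def,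
        Option.some.injEq, forall_eq', WR]
      exact ⟨cop2 1 (-1) 0 (by omega) (by ring), cop3 (by ring) (by omega)⟩

theorem ladder_subgraph_of_coprime_graph (n : ℕ) (hn : 0 < n) :
    ∃ f : Fin n × Fin 2 → {x : ℕ // x ∈ Set.Icc 1 (2 * n)},
      Function.Injective f ∧
      ∀ u v : Fin n × Fin 2,
        (pathGraph n □ pathGraph 2).Adj u v →
          (f u : ℕ) ≠ (f v : ℕ) ∧ Nat.gcd (f u : ℕ) (f v : ℕ) = 1 := by
  obtain ⟨l, hr, hch, hlen, hcov, -⟩ := ladT_all n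
  have hlen : l.length = n := by omega
  subst hlen
  let g : Fin l.length × Fin 2 → ℤ := fun u => if u.2 = 0 then (l[u.1]).1 else (l[u.1]).2
  have hsurj : Finset.Icc (1 : ℤ) (2 * l.length) ⊆ Finset.univ.image g := by
    intro x hx
    rw [Finset.mem_Icc] at hx
    obtain ⟨c, hc, h⟩ := hcov x hx.1 hx.2
    obtain ⟨i, hi, rfl⟩ := List.getElem_of_mem hc
    rw [Finset.mem_image]
    rcases h with h | h
    · exact ⟨(⟨i, hi⟩, 0), Finset.mem_univ _, by simp [g, h]⟩
    · exact ⟨(⟨i, hi⟩, 1), Finset.mem_univ _, by simp [g, h]⟩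
  have hcard : (Finset.Icc (1 : ℤ) (2 * l.length)).card = 2 * l.length := by
    rw [Int.card_Icc]; omega
  have hcu : (Finset.univ : Finset (Fin l.length × Fin 2)).card = 2 * l.length := by
    simp [mul_comm]
  have himg : Finset.Icc (1 : ℤ) (2 * l.length) = Finset.univ.image g := by
    apply Finset.eq_of_subset_of_card_le hsurj
    rw [hcard, ← hcu]
    exact Finset.card_image_le
  have hinj : Function.Injective g := by
    have := Finset.card_image_iff.1 (show (Finset.univ.image g).card = Finset.univ.card by
      rw [← himg, hcard, hcu])
    intro a b hab
    exact this (by simp) (by simp) hab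
  have hmem : ∀ u, 1 ≤ g u ∧ g u ≤ 2 * l.length := by
    intro u
    have : g u ∈ Finset.Icc (1 : ℤ) (2 * l.length) := by
      rw [himg]; exact Finset.mem_image_of_mem _ (Finset.mem_univ _)
    exact Finset.mem_Icc.1 this
  have hcop : ∀ u v, (pathGraph l.length □ pathGraph 2).Adj u v → IsCoprime (g u) (g v) := by
    have hstep : ∀ (i j : Fin l.length) (t : Fin 2), i.1 + 1 = j.1 →
        IsCoprime (g (i, t)) (g (j, t)) := by
      rintro ⟨i, hi⟩ ⟨j, hj⟩ t hij
      simp only at hij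
      subst hij
      have := List.isChain_iff_getElem.1 hch i hj
      by_cases ht : t = 0
      · simpa [g, ht] using this.1
      · simpa [g, ht] using this.2
    rintro ⟨i, s⟩ ⟨j, t⟩ h
    rw [boxProd_adj] at h
    rcases h with ⟨h, h'⟩ | ⟨h, h'⟩
    · simp only at h h'
      subst h'
      rw [pathGraph_adj] at h
      rcases h with h | h
      · exact hstep _ _ _ h
      · exact (hstep _ _ _ h).symm
    · simp only at h h'
      subst h'
      have hrr := hr l[i] (List.getElem_mem _)
      have hne := h.ne
      fin_cases s <;> fin_cases t <;> simp at hne <;> simp [g]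
      · exact hrr
      · exact hrr.symm
  refine ⟨fun u => ⟨(g u).toNat, by have := hmem u; simp only [Set.mem_Icc]; omega⟩, ?_, ?_⟩
  · intro u v huv
    simp only [Subtype.mk.injEq] at huv
    have h1 := hmem u
    have h2 := hmem v
    exact hinj (by omega)
  · intro u v huv
    have h1 := hmem u
    have h2 := hmem v
    refine ⟨fun h => huv.ne (hinj ?_), ?_⟩
    · simp only at h
      omega
    · have hc := Int.isCoprime_iff_gcd_eq_one.1 (hcop u v huv)
      refine Eq.trans ?_ hc
      change Nat.gcd (g u).toNat (g v).toNat = Nat.gcd (g u).natAbs (g v).natAbs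
      congr 1 <;> omega
end
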